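/- arXiv:2302.11943 — 4 statements merged into one kernel-verified Lean document; each statement's English description precedes it below -/
import Mathlib

section
/- Let G be a group isomorphic to PSL₂(11) and let (ρ_0, …, ρ_{r−1}) be a string C-group representation of G with r ∈ {4,5}. Then r = 4 and the Schläfli type is (3,5,3); that is, the only abstract regular polytope of rank 4 or 5 for PSL₂(11) is the 11-cell. -/
/-!
The group `SL₂(11)` covers `PSL₂(11)` with kernel `{1, -1}`, and a matrix of determinant `1`
represents an involution of `PSL₂(11)` exactly when its trace is zero.  Involutions are thus
the vectors of norm one, up to sign, in the three-dimensional space of traceless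
matrices with the quadratic form `det`; two distinct involutions commute exactly when the
corresponding vectors are orthogonal, and conjugation by an involution acts as a reflection up
to sign.

A representation of rank 5 gives `s₀, s₁ ⊥ s₃, s₄`, which is impossible in dimension three
(`eq_or_neg_of_orthogonal`).  In rank 4, put `a = ⟨s₀, s₁⟩`, `b = ⟨s₁, s₂⟩`,
`c = ⟨s₂, s₃⟩`.  Since four vectors of a three-dimensional space are dependent,
`b² = (1 - a²)(1 - c²)` (`gram_relation`).  None of the three inner products vanishes, and none
has square one, because a unit vector cannot be orthogonal to a nonzero isotropic vector:
`-1` is not a square modulo 11 (`isotropic_eq_zero`).  The remaining solutions correspond to the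
Schläfli types `(3,5,3)`, `(3,5,6)`, `(6,5,3)`, `(6,6,6)`, `(5,6,5)` and `(5,5,5)`.  All but the
first violate the intersection property.  If `ρ₀ρ₁` has order 6 then `ρ₃ = (ρ₀ρ₁)³`
(`mem_of_trace_sq_eq_three`), and dually; for `(5,6,5)` and `(5,5,5)` the vector `s₃` is obtained
from `s₀, s₁, s₂` by explicit reflections (`mem_of_type_565`, `mem_of_type_555`), so `ρ₃` lies in
the subgroup generated by the other three.
-/

/-- PSL₂(11): the quotient of SL(2, ZMod 11) by its center. -/
abbrev PSL2_11 :=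
  Matrix.SpecialLinearGroup (Fin 2) (ZMod 11) ⧸
    Subgroup.center (Matrix.SpecialLinearGroup (Fin 2) (ZMod 11))

/-- An involution: an element of order 2. -/
def IsInvolution {G : Type*} [Group G] (g : G) : Prop := g ≠ 1 ∧ g * g = 1

/-- The string (commuting) property: `(ρ i * ρ j)^2 = 1` whenever `|i - j| > 1`. -/
def StringCommuting {G : Type*} [Group G] {r : ℕ} (ρ : Fin r → G) : Prop :=
  ∀ i j : Fin r, ((i : ℕ) + 1 < j ∨ (j : ℕ) + 1 < i) → (ρ i * ρ j) * (ρ i * ρ j) = 1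

/-- The intersection property of string C-groups. -/
def IntersectionProperty {G : Type*} [Group G] {r : ℕ} (ρ : Fin r → G) : Prop :=
  ∀ J K : Set (Fin r),
    Subgroup.closure (ρ '' J) ⊓ Subgroup.closure (ρ '' K) =
      Subgroup.closure (ρ '' (J ∩ K))

/-- A string C-group representation of a group `G`: an ordered list of
involutions generating `G`, satisfying the commuting property and the
intersection property. -/
def IsStringCRep {G : Type*} [Group G] {r : ℕ} (ρ : Fin r → G) : Prop :=
  (∀ i, IsInvolution (ρ i)) ∧ StringCommuting ρ ∧
    Subgroup.closure (Set.range ρ) = ⊤ ∧ IntersectionProperty ρ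

namespace ElevenCell

open Matrix

/-- The field with eleven elements. -/
abbrev K := ZMod 11

/-- The algebra of `2 × 2` matrices over the field with eleven elements. -/
abbrev M := Matrix (Fin 2) (Fin 2) K

/-- The group `SL₂(11)`. -/
abbrev S := SpecialLinearGroup (Fin 2) K

instance : Fact (Nat.Prime 11) := ⟨by norm_num⟩

/-- The bilinear form `-tr(XY)/2` (note `5 = -1/2` modulo 11).  On traceless matrices its
quadratic form is the determinant. -/
def form (X Y : M) : K := 5 * (X * Y).trace

theorem form_eq (X Y : M) :
    form X Y = 5 * (X 0 0 * Y 0 0 + X 0 1 * Y 1 0 + X 1 0 * Y 0 1 + X 1 1 * Y 1 1) := by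
  simp only [form, trace_fin_two, mul_apply, Fin.sum_univ_two]
  ring

theorem form_comm (X Y : M) : form X Y = form Y X := by
  simp only [form_eq]; ring

theorem form_add_left (X Y Z : M) : form (X + Y) Z = form X Z + form Y Z := by
  simp [form, add_mul, mul_add]

theorem form_sub_left (X Y Z : M) : form (X - Y) Z = form X Z - form Y Z := by
  simp [form, sub_mul, mul_sub]

theorem form_smul_left (k : K) (X Z : M) : form (k • X) Z = k * form X Z := by
  simp [form]; ring

theorem form_add_right (X Y Z : M) : form Z (X + Y) = form Z X + form Z Y := by
  simp [form, mul_add]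

theorem form_sub_right (X Y Z : M) : form Z (X - Y) = form Z X - form Z Y := by
  simp [form, mul_sub]

theorem form_smul_right (k : K) (X Z : M) : form Z (k • X) = k * form Z X := by
  simp [form]; ring

theorem form_neg_left (X Z : M) : form (-X) Z = -form X Z := by
  simp [form]

/-- Traceless matrices: the three-dimensional quadratic space of the argument. -/
def Pure (X : M) : Prop := X 1 1 = -X 0 0

theorem pure_iff (X : M) : Pure X ↔ X.trace = 0 := by
  rw [Pure, trace_fin_two]
  constructor <;> intro h <;> linear_combination h

theorem Pure.add {X Y : M} (hX : Pure X) (hY : Pure Y) : Pure (X + Y) := by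
  simp only [Pure, Matrix.add_apply] at *; rw [hX, hY]; ring

theorem Pure.sub {X Y : M} (hX : Pure X) (hY : Pure Y) : Pure (X - Y) := by
  simp only [Pure, Matrix.sub_apply] at *; rw [hX, hY]; ring

theorem Pure.smul {X : M} (k : K) (hX : Pure X) : Pure (k • X) := by
  simp only [Pure, Matrix.smul_apply, smul_eq_mul] at *; rw [hX]; ring

theorem Pure.neg {X : M} (hX : Pure X) : Pure (-X) := by
  simp only [Pure, Matrix.neg_apply] at *; rw [hX]

theorem det_entries (s : S) : s.val 0 0 * s.val 1 1 - s.val 0 1 * s.val 1 0 = 1 := by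
  rw [← det_fin_two, s.2]

theorem form_self (s : S) (hs : Pure s.val) : form s.val s.val = 1 := by
  have h := det_entries s
  rw [Pure] at hs
  rw [form_eq]
  grind

/-! ### Geometry of the quadratic space -/

/-- `X` and `Y` are parallel: all `2 × 2` minors of their coordinates vanish. -/
def Parallel (X Y : M) : Prop :=
  X 0 0 * Y 0 1 = X 0 1 * Y 0 0 ∧ X 0 0 * Y 1 0 = X 1 0 * Y 0 0 ∧ X 0 1 * Y 1 0 = X 1 0 * Y 0 1

theorem Parallel.eq_smul {X Y : M} (h : Parallel X Y) (hX : Pure X) (hY : Pure Y)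
    (hYY : form Y Y = 1) : X = form X Y • Y := by
  obtain ⟨h1, h2, h3⟩ := h
  rw [Pure] at hX hY
  rw [form_eq] at hYY ⊢
  ext i j
  fin_cases i <;> fin_cases j <;> simp <;> grind

theorem eq_or_neg_of_eq_smul {s t : S} (hs : Pure s.val) (ht : Pure t.val)
    {k : K} (h : s.val = k • t.val) : s = t ∨ s = -t := by
  have h1 : k ^ 2 = 1 := by
    have := form_self s hs
    rw [h, form_smul_left, form_smul_right, form_self t ht] at this
    linear_combination this
  rcases eq_or_eq_neg_of_sq_eq_sq k 1 (by rw [h1, one_pow]) with rfl | rfl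
  · left; ext i j; simp [h]
  · right; ext i j; simp [h]

/-- The common orthogonal complement of two nonparallel vectors is at most one-dimensional:
each of its elements is a multiple of the dual of their cross product. -/
theorem parallel_of_orthogonal {A B C D : M} (hA : Pure A) (hB : Pure B) (hC : Pure C)
    (hD : Pure D) (hAC : form A C = 0) (hAD : form A D = 0) (hBC : form B C = 0)
    (hBD : form B D = 0) (h : ¬ Parallel A B) : Parallel C D := by
  simp only [form_eq, Pure] at *
  rw [hA, hC] at hAC
  rw [hA, hD] at hAD
  rw [hB, hC] at hBC
  rw [hB, hD] at hBD
  clear hA hB hC hD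
  simp only [Parallel, not_and_or] at *
  rcases h with h | h | h
  · refine ⟨?_, ?_, ?_⟩ <;> grind
  · refine ⟨?_, ?_, ?_⟩ <;> grind
  · refine ⟨?_, ?_, ?_⟩ <;> grind

/-- An isotropic vector orthogonal to a vector of norm one vanishes, because `-1` is not a square
modulo 11. -/
theorem isotropic_eq_zero {U B : M} (hU : Pure U) (hB : Pure B) (hBB : form B B = 1)
    (hUU : form U U = 0) (hUB : form U B = 0) : U = 0 := by
  -- With `m` as below, `m² = -U₀₁²`, respectively `m² = -U₁₀²`.
  have nonsq : ∀ m q : K, m ^ 2 + q ^ 2 = 0 → q = 0 := by decide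
  rw [form_eq] at hBB hUU hUB
  rw [Pure] at hU hB
  have h01 : U 0 1 = 0 := by
    apply nonsq (U 0 0 * B 0 1 - U 0 1 * B 0 0)
    grind
  have h10 : U 1 0 = 0 := by
    apply nonsq (U 0 0 * B 1 0 - U 1 0 * B 0 0)
    grind
  have h00 : U 0 0 = 0 := by
    rw [hU, h01, h10] at hUU
    have : U 0 0 ^ 2 = 0 := by grind
    exact pow_eq_zero_iff two_ne_zero |>.mp this
  ext i j
  fin_cases i <;> fin_cases j <;> simp [h00, h01, h10, hU]

/-- A pair of distinct involutions never has a product of order 11: then `s ∓ t` would be isotropic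
and orthogonal to `t`. -/
theorem sq_form_ne_one {s t : S} (hs : Pure s.val) (ht : Pure t.val) (h1 : s ≠ t) (h2 : s ≠ -t) :
    form s.val t.val ^ 2 ≠ 1 := by
  intro h
  have h3 : s.val - form s.val t.val • t.val = 0 := by
    apply isotropic_eq_zero (hs.sub (ht.smul _)) ht (form_self t ht)
    · simp only [form_sub_left, form_sub_right, form_smul_left, form_smul_right, form_self s hs,
        form_self t ht, form_comm t.val s.val]
      linear_combination -h
    · simp only [form_sub_left, form_smul_left, form_self t ht]
      ring
  rcases eq_or_neg_of_eq_smul hs ht (sub_eq_zero.mp h3) with h | h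
  exacts [h1 h, h2 h]

/-- Two pairs of unit vectors, each orthogonal to the other pair, cannot both be independent in
dimension three. -/
theorem eq_or_neg_of_orthogonal {s t u v : S} (hs : Pure s.val) (ht : Pure t.val)
    (hu : Pure u.val) (hv : Pure v.val) (hsu : form s.val u.val = 0) (hsv : form s.val v.val = 0)
    (htu : form t.val u.val = 0) (htv : form t.val v.val = 0) (h1 : s ≠ t) (h2 : s ≠ -t) :
    u = v ∨ u = -v := by
  have hnp : ¬ Parallel s.val t.val := fun h =>
    (eq_or_neg_of_eq_smul hs ht (h.eq_smul hs ht (form_self t ht))).elim h1 h2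
  exact eq_or_neg_of_eq_smul hu hv
    ((parallel_of_orthogonal hs ht hu hv hsu hsv htu htv hnp).eq_smul hu hv (form_self v hv))

/-- For unit vectors `s₀, …, s₃` with `s₀ ⊥ s₂, s₃` and `s₁ ⊥ s₃`, the vector `s₃` is
a combination of the other three: the difference of the two sides below is
orthogonal to `s₀`, `s₁` and `s₃`. -/
theorem relation {s₀ s₁ s₂ s₃ : S} (h₀ : Pure s₀.val) (h₁ : Pure s₁.val) (h₂ : Pure s₂.val)
    (h₃ : Pure s₃.val) {a b c : K} (ha : form s₀.val s₁.val = a) (hb : form s₁.val s₂.val = b)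
    (hc : form s₂.val s₃.val = c) (h02 : form s₀.val s₂.val = 0) (h03 : form s₀.val s₃.val = 0)
    (h13 : form s₁.val s₃.val = 0) (h1 : s₀ ≠ s₁) (h2 : s₀ ≠ -s₁) :
    (c * (1 - a ^ 2)) • s₃.val =
      (a * b) • s₀.val - b • s₁.val + (1 - a ^ 2) • s₂.val := by
  set U := (a * b) • s₀.val - b • s₁.val + (1 - a ^ 2) • s₂.val - (c * (1 - a ^ 2)) • s₃.val with hU
  have pU : Pure U := (((h₀.smul _).sub (h₁.smul _)).add (h₂.smul _)).sub (h₃.smul _)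
  have ha' := form_comm s₁.val s₀.val
  have hnp : ¬ Parallel s₀.val s₁.val := fun h =>
    (eq_or_neg_of_eq_smul h₀ h₁ (h.eq_smul h₀ h₁ (form_self s₁ h₁))).elim h1 h2
  have hp : Parallel U s₃.val := by
    apply parallel_of_orthogonal h₀ h₁ pU h₃ _ h03 _ h13 hnp
    · simp only [hU, form_sub_right, form_add_right, form_smul_right, form_self s₀ h₀, ha, h02, h03]
      ring
    · simp only [hU, form_sub_right, form_add_right, form_smul_right, form_self s₁ h₁, ha', ha, hb,
        h13]
      ring
  have h := hp.eq_smul pU h₃ (form_self s₃ h₃)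
  have h0 : form U s₃.val = 0 := by
    simp only [hU, form_sub_left, form_add_left, form_smul_left, form_self s₃ h₃, h03, h13, hc]
    ring
  rw [h0, zero_smul] at h
  exact (sub_eq_zero.mp h).symm

/-- The vanishing of the Gram determinant of four vectors in a three-dimensional space. -/
theorem gram_relation {s₀ s₁ s₂ s₃ : S} (h₀ : Pure s₀.val) (h₁ : Pure s₁.val) (h₂ : Pure s₂.val)
    (h₃ : Pure s₃.val) {a b c : K} (ha : form s₀.val s₁.val = a) (hb : form s₁.val s₂.val = b)
    (hc : form s₂.val s₃.val = c) (h02 : form s₀.val s₂.val = 0) (h03 : form s₀.val s₃.val = 0)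
    (h13 : form s₁.val s₃.val = 0) (h1 : s₀ ≠ s₁) (h2 : s₀ ≠ -s₁) :
    b ^ 2 = (1 - a ^ 2) * (1 - c ^ 2) := by
  have h := congrArg (fun X => form X s₂.val)
    (relation h₀ h₁ h₂ h₃ ha hb hc h02 h03 h13 h1 h2)
  simp only [form_sub_left, form_add_left, form_smul_left, form_self s₂ h₂, h02, hb,
    form_comm s₃.val s₂.val, hc] at h
  linear_combination h

/-! ### Passing to the quotient by `{1, -1}` -/

theorem val_mul (s t : S) : (s * t).val = s.val * t.val := rfl

/-- The Cayley–Hamilton relation for matrices of determinant one. -/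
theorem sq_eq (s : S) : s.val * s.val = s.val.trace • s.val - 1 := by
  have h := det_entries s
  ext i j
  fin_cases i <;> fin_cases j <;> simp [mul_apply, Fin.sum_univ_two, trace_fin_two] <;> grind

theorem mk_eq_one_iff (s : S) : QuotientGroup.mk' (Subgroup.center S) s = 1 ↔ s = 1 ∨ s = -1 := by
  rw [QuotientGroup.mk'_apply, QuotientGroup.eq_one_iff, Matrix.SpecialLinearGroup.mem_center_iff]
  constructor
  · rintro ⟨k, hk, h⟩
    simp only [Fintype.card_fin] at hk
    rcases eq_or_eq_neg_of_sq_eq_sq k 1 (by rw [hk, one_pow]) with rfl | rfl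
    · left; ext i j; rw [← h]; simp
    · right; ext i j; rw [← h]; by_cases hij : i = j <;> simp [Matrix.neg_apply, one_apply, hij]
  · rintro (rfl | rfl)
    · exact ⟨1, by simp, by simp⟩
    · refine ⟨-1, by simp, ?_⟩
      ext i j; by_cases hij : i = j <;> simp [Matrix.neg_apply, one_apply, hij]

/-- A surjection from `SL₂(11)` with kernel `{1, -1}`. -/
def IsCover {G : Type*} [Group G] (φ : S →* G) : Prop :=
  Function.Surjective φ ∧ ∀ s, φ s = 1 ↔ s = 1 ∨ s = -1

section Cover

variable {G : Type*} [Group G] {φ : S →* G}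

theorem IsCover.map_neg (hφ : IsCover φ) (s : S) : φ (-s) = φ s := by
  have : φ (-1) = 1 := (hφ.2 _).2 (Or.inr rfl)
  rw [← neg_one_mul, map_mul, this, one_mul]

theorem IsCover.ne_of_ne (hφ : IsCover φ) {s t : S} (h : φ s ≠ φ t) : s ≠ t ∧ s ≠ -t :=
  ⟨fun e => h (e ▸ rfl), fun e => h (by rw [e, hφ.map_neg])⟩

/-- Involutions lift to traceless matrices. -/
theorem IsCover.pure_of_involution (hφ : IsCover φ) {s : S} (h1 : φ s ≠ 1)
    (h2 : φ s * φ s = 1) : Pure s.val := by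
  rw [← map_mul, hφ.2] at h2
  rw [Ne, hφ.2] at h1
  have h3 := sq_eq s
  rw [pure_iff]
  by_contra ht
  have smul : ∃ k : K, s.val = k • (1 : M) := by
    rcases h2 with h2 | h2
    · have h4 : s.val * s.val = 1 := by rw [← val_mul, h2]; rfl
      refine ⟨s.val.trace⁻¹ * 2, ?_⟩
      rw [h4] at h3
      rw [mul_smul, eq_inv_smul_iff₀ ht, sub_eq_iff_eq_add.mp h3.symm, two_smul]
    · have h4 : s.val * s.val = -1 := by rw [← val_mul, h2]; rfl
      refine ⟨0, ?_⟩
      rw [h4, eq_sub_iff_add_eq, neg_add_cancel] at h3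
      rw [zero_smul]
      exact (smul_eq_zero.mp h3.symm).resolve_left ht
  obtain ⟨k, hk⟩ := smul
  have hd := s.2
  rw [hk, det_smul, det_one, mul_one, Fintype.card_fin] at hd
  apply h1
  rcases eq_or_eq_neg_of_sq_eq_sq k 1 (by rw [hd, one_pow]) with rfl | rfl
  · left; ext i j; simp [hk]
  · right; ext i j; simp [hk]

/-- Distinct commuting involutions lift to orthogonal vectors: their product is again an
involution, so its lift is traceless. -/
theorem IsCover.form_eq_zero_of_commute (hφ : IsCover φ) {s t : S} (hne : φ s ≠ φ t)
    (ht : φ t * φ t = 1) (h : φ s * φ t * (φ s * φ t) = 1) : form s.val t.val = 0 := by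
  have h1 : φ (s * t) ≠ 1 := by
    rw [map_mul]
    intro h2
    exact hne (mul_right_cancel (h2.trans ht.symm))
  have h2 := hφ.pure_of_involution h1 (by rw [map_mul, h])
  rw [pure_iff] at h2
  rw [form, ← val_mul, h2, mul_zero]

/-! ### Orders of products of two involutions -/

/-- Trace `±1` gives an element of order 3 in the quotient. -/
theorem cube_eq (s : S) (h : s.val.trace ^ 2 = 1) : s ^ 3 = 1 ∨ s ^ 3 = -1 := by
  have h1 : (s ^ 3).val = -s.val.trace • (1 : M) := by
    have h2 : (s ^ 3).val = s.val * s.val * s.val := by rw [pow_succ, pow_two]; rfl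
    rw [h2, sq_eq, sub_mul, smul_mul_assoc, sq_eq, smul_sub, smul_smul, ← pow_two, h]
    simp
  rcases eq_or_eq_neg_of_sq_eq_sq s.val.trace 1 (by rw [h, one_pow]) with h | h
  · right; ext i j; rw [h1, h]; simp
  · left; ext i j; rw [h1, h]; simp

/-- A trace with square `5` gives an element of order 5 in the quotient. -/
theorem fifth_eq (s : S) (h : s.val.trace ^ 2 = 5) : s ^ 5 = 1 ∨ s ^ 5 = -1 := by
  have h1 : (s ^ 5).val = (-3 * s.val.trace) • (1 : M) := by
    have h2 : (s ^ 5).val = s.val * s.val * (s.val * s.val) * s.val := by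
      have : s ^ 5 = s * s * (s * s) * s := by simp only [pow_succ, pow_zero, one_mul, mul_assoc]
      rw [this]; rfl
    have hd := det_entries s
    rw [h2]
    rw [trace_fin_two] at h ⊢
    ext i j
    fin_cases i <;> fin_cases j <;> simp [mul_apply, Fin.sum_univ_two] <;> grind
  have h3 : (-3 * s.val.trace) ^ 2 = 1 ^ 2 := by
    rw [mul_pow, h]; decide
  rcases eq_or_eq_neg_of_sq_eq_sq _ _ h3 with h | h
  · left; ext i j; rw [h1, h]; simp
  · right; ext i j; rw [h1, h]; simp

theorem trace_mul_sq (s t : S) : (s * t).val.trace ^ 2 = 4 * form s.val t.val ^ 2 := by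
  rw [form, val_mul, mul_pow, ← mul_assoc]
  have : (4 : K) * 5 ^ 2 = 1 := by decide
  rw [this, one_mul]

theorem IsCover.orderOf_eq_three (hφ : IsCover φ) {s t : S} (hne : φ s * φ t ≠ 1)
    (h : form s.val t.val ^ 2 = 3) : orderOf (φ s * φ t) = 3 := by
  refine orderOf_eq_prime ?_ hne
  rw [← map_mul, ← map_pow, hφ.2]
  exact cube_eq _ (by rw [trace_mul_sq, h]; decide)

theorem IsCover.orderOf_eq_five (hφ : IsCover φ) {s t : S} (hne : φ s * φ t ≠ 1)
    (h : form s.val t.val ^ 2 = 4) : orderOf (φ s * φ t) = 5 := by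
  have : Fact (Nat.Prime 5) := ⟨by norm_num⟩
  refine orderOf_eq_prime ?_ hne
  rw [← map_mul, ← map_pow, hφ.2]
  exact fifth_eq _ (by rw [trace_mul_sq, h]; decide)

/-! ### Involutions in the subgroup generated by others -/

/-- Conjugation by an involution is, up to sign, a reflection. -/
theorem val_conj {s t : S} (hs : Pure s.val) (ht : Pure t.val) :
    (t * s * t).val = s.val - (2 * form s.val t.val) • t.val := by
  have h := det_entries t
  rw [form_eq, val_mul, val_mul]
  rw [Pure] at hs ht
  ext i j
  fin_cases i <;> fin_cases j <;> simp [mul_apply, Fin.sum_univ_two] <;> grind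

theorem pure_conj {s t : S} (hs : Pure s.val) (ht : Pure t.val) : Pure (t * s * t).val := by
  rw [val_conj hs ht]
  exact hs.sub (ht.smul _)

theorem mem_conj {H : Subgroup G} {s t : S} (hs : φ s ∈ H) (ht : φ t ∈ H) : φ (t * s * t) ∈ H := by
  rw [map_mul, map_mul]
  exact H.mul_mem (H.mul_mem ht hs) ht

/-- In an orthogonal triple of involutions each is the product of the other two. -/
theorem IsCover.mem_of_orthogonal (hφ : IsCover φ) {H : Subgroup G} {s t u : S} (hs : Pure s.val)
    (ht : Pure t.val) (hu : Pure u.val) (hst : form s.val t.val = 0) (hsu : form s.val u.val = 0)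
    (htu : form t.val u.val = 0) (hsH : φ s ∈ H) (htH : φ t ∈ H)
    (h1 : s ≠ t) (h2 : s ≠ -t) : φ u ∈ H := by
  have hp : Pure (s * t).val := by
    rw [pure_iff, val_mul]
    exact (mul_eq_zero.mp hst).resolve_left (by decide)
  have hm : φ (s * t) ∈ H := by rw [map_mul]; exact H.mul_mem hsH htH
  have e1 : form s.val (s * t).val = 0 := by
    rw [val_mul]; rw [form_eq]; rw [Pure] at hs ht
    simp [mul_apply, Fin.sum_univ_two]; grind
  have e2 : form t.val (s * t).val = 0 := by
    rw [val_mul]; rw [form_eq]; rw [Pure] at hs ht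
    simp [mul_apply, Fin.sum_univ_two]; grind
  rcases eq_or_neg_of_orthogonal hs ht hu hp hsu e1 htu e2 h1 h2 with h | h
  · rwa [h]
  · rwa [h, hφ.map_neg]

/-- If `st` has order 6 in the quotient, the only involution orthogonal to both `s` and `t` is the
central involution `(st)³` of the dihedral group they generate. -/
theorem IsCover.mem_of_trace_sq_eq_three (hφ : IsCover φ) {H : Subgroup G} {s t u : S}
    (hs : Pure s.val) (ht : Pure t.val) (hu : Pure u.val) (hst : form s.val t.val ^ 2 = 9)
    (hsu : form s.val u.val = 0) (htu : form t.val u.val = 0) (hsH : φ s ∈ H) (htH : φ t ∈ H)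
    (h1 : s ≠ t) (h2 : s ≠ -t) : φ u ∈ H := by
  have htr : (s * t).val.trace ^ 2 = 3 := by rw [trace_mul_sq, hst]; decide
  have hm : φ ((s * t) ^ 3) ∈ H := by
    rw [map_pow, map_mul]; exact H.pow_mem (H.mul_mem hsH htH) 3
  have hv : ((s * t) ^ 3).val = (2 : K) • (s * t).val - (s * t).val.trace • (1 : M) := by
    have h2 : ((s * t) ^ 3).val = (s * t).val * (s * t).val * (s * t).val := by
      rw [pow_succ, pow_two]; rfl
    rw [h2, sq_eq, sub_mul, smul_mul_assoc, sq_eq, smul_sub, smul_smul, ← pow_two, htr, one_mul,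
      sub_right_comm]
    have h3 : (3 : K) - 1 = 2 := by decide
    rw [← h3, sub_smul, one_smul]
  have hp : Pure ((s * t) ^ 3).val := by
    rw [pure_iff, hv, trace_sub, trace_smul, trace_smul, trace_one, Fintype.card_fin]
    simp [mul_comm]
  have e1 : form s.val ((s * t) ^ 3).val = 0 := by
    rw [hv, val_mul, form_eq]; rw [Pure] at hs ht
    simp [mul_apply, Fin.sum_univ_two, trace_fin_two]; grind
  have e2 : form t.val ((s * t) ^ 3).val = 0 := by
    rw [hv, val_mul, form_eq]; rw [Pure] at hs ht
    simp [mul_apply, Fin.sum_univ_two, trace_fin_two]; grind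
  rcases eq_or_neg_of_orthogonal hs ht hu hp hsu e1 htu e2 h1 h2 with h | h
  · rwa [h]
  · rwa [h, hφ.map_neg]

/-- In type `(5,6,5)` the last involution is a word in the first three. -/
theorem IsCover.mem_of_type_565 {H : Subgroup G} {s₀ s₁ s₂ s₃ : S} (h₀ : Pure s₀.val)
    (h₁ : Pure s₁.val) (h₂ : Pure s₂.val)
    (h₃ : Pure s₃.val) (ha : form s₀.val s₁.val = 2) (hb : form s₁.val s₂.val = 3)
    (hc : form s₂.val s₃.val = 2) (h02 : form s₀.val s₂.val = 0) (h03 : form s₀.val s₃.val = 0)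
    (h13 : form s₁.val s₃.val = 0) (h1 : s₀ ≠ s₁) (h2 : s₀ ≠ -s₁)
    (m₀ : φ s₀ ∈ H) (m₁ : φ s₁ ∈ H) (m₂ : φ s₂ ∈ H) : φ s₃ ∈ H := by
  have rel := relation h₀ h₁ h₂ h₃ ha hb hc h02 h03 h13 h1 h2
  -- Each new vector is a reflection of an earlier one; the last has the coordinates of `s₃` in the
  -- basis `s₀, s₁, s₂`, which `rel` determines.
  have ha' := form_comm s₁.val s₀.val
  have hb' := form_comm s₂.val s₁.val
  have h02' := form_comm s₂.val s₀.val
  obtain ⟨x, hx, px, mx⟩ : ∃ x : S, x.val = s₁.val - (2 * form s₁.val s₀.val) • s₀.val ∧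
      Pure x.val ∧ φ x ∈ H := ⟨_, val_conj h₁ h₀, pure_conj h₁ h₀, mem_conj m₁ m₀⟩
  obtain ⟨y, hy, py, my⟩ : ∃ y : S, y.val = s₂.val - (2 * form s₂.val s₁.val) • s₁.val ∧
      Pure y.val ∧ φ y ∈ H := ⟨_, val_conj h₂ h₁, pure_conj h₂ h₁, mem_conj m₂ m₁⟩
  obtain ⟨z, hz, pz, mz⟩ : ∃ z : S, z.val = x.val - (2 * form x.val y.val) • y.val ∧
      Pure z.val ∧ φ z ∈ H := ⟨_, val_conj px py, pure_conj px py, mem_conj mx my⟩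
  obtain ⟨w, hw, -, mw⟩ : ∃ w : S, w.val = s₂.val - (2 * form s₂.val z.val) • z.val ∧
      Pure w.val ∧ φ w ∈ H := ⟨_, val_conj h₂ pz, pure_conj h₂ pz, mem_conj m₂ mz⟩
  have hxy : form x.val y.val = 1 := by
    rw [hx, hy]
    simp only [form_sub_right, form_smul_right, form_sub_left, form_smul_left, ha', hb', ha, hb, h02,
      form_self s₁ h₁]
    decide
  have h2z : form s₂.val z.val = 4 := by
    rw [hz, hxy, hx, hy]
    simp only [form_sub_right, form_smul_right, ha', hb', h02', ha, hb, h02, form_self s₂ h₂]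
    decide
  have hsw : s₃ = w := by
    ext i j
    have rel' := congrFun (congrFun rel i) j
    rw [hw, h2z, hz, hxy, hx, hy, ha', hb', ha, hb]
    simp only [Matrix.sub_apply, Matrix.smul_apply, Matrix.add_apply, smul_eq_mul] at rel' ⊢
    grind
  rwa [hsw]

/-- In type `(5,5,5)` the last involution is a word in the first three. -/
theorem IsCover.mem_of_type_555 {H : Subgroup G} {s₀ s₁ s₂ s₃ : S} (h₀ : Pure s₀.val)
    (h₁ : Pure s₁.val) (h₂ : Pure s₂.val)
    (h₃ : Pure s₃.val) (ha : form s₀.val s₁.val = 4) (hb : form s₁.val s₂.val = 4)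
    (hc : form s₂.val s₃.val = 4) (h02 : form s₀.val s₂.val = 0) (h03 : form s₀.val s₃.val = 0)
    (h13 : form s₁.val s₃.val = 0) (h1 : s₀ ≠ s₁) (h2 : s₀ ≠ -s₁)
    (m₀ : φ s₀ ∈ H) (m₁ : φ s₁ ∈ H) (m₂ : φ s₂ ∈ H) : φ s₃ ∈ H := by
  have rel := relation h₀ h₁ h₂ h₃ ha hb hc h02 h03 h13 h1 h2
  -- Each new vector is a reflection of an earlier one; the last has the coordinates of `s₃` in the
  -- basis `s₀, s₁, s₂`, which `rel` determines.
  have ha' := form_comm s₁.val s₀.val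
  have hb' := form_comm s₂.val s₁.val
  have h02' := form_comm s₂.val s₀.val
  obtain ⟨x, hx, px, mx⟩ : ∃ x : S, x.val = s₀.val - (2 * form s₀.val s₁.val) • s₁.val ∧
      Pure x.val ∧ φ x ∈ H := ⟨_, val_conj h₀ h₁, pure_conj h₀ h₁, mem_conj m₀ m₁⟩
  obtain ⟨y, hy, py, my⟩ : ∃ y : S, y.val = s₂.val - (2 * form s₂.val x.val) • x.val ∧
      Pure y.val ∧ φ y ∈ H := ⟨_, val_conj h₂ px, pure_conj h₂ px, mem_conj m₂ mx⟩
  obtain ⟨z, hz, pz, mz⟩ : ∃ z : S, z.val = s₀.val - (2 * form s₀.val y.val) • y.val ∧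
      Pure z.val ∧ φ z ∈ H := ⟨_, val_conj h₀ py, pure_conj h₀ py, mem_conj m₀ my⟩
  obtain ⟨v, hv, pv, mv⟩ : ∃ v : S, v.val = s₁.val - (2 * form s₁.val z.val) • z.val ∧
      Pure v.val ∧ φ v ∈ H := ⟨_, val_conj h₁ pz, pure_conj h₁ pz, mem_conj m₁ mz⟩
  obtain ⟨w, hw, -, mw⟩ : ∃ w : S, w.val = s₂.val - (2 * form s₂.val v.val) • v.val ∧
      Pure w.val ∧ φ w ∈ H := ⟨_, val_conj h₂ pv, pure_conj h₂ pv, mem_conj m₂ mv⟩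
  have h2x : form s₂.val x.val = 1 := by
    rw [hx]
    simp only [form_sub_right, form_smul_right, hb', h02', ha, hb, h02]
    decide
  have h0y : form s₀.val y.val = 7 := by
    rw [hy, h2x, hx]
    simp only [form_sub_right, form_smul_right, ha, h02, form_self s₀ h₀]
    decide
  have h1z : form s₁.val z.val = 1 := by
    rw [hz, h0y, hy, h2x, hx]
    simp only [form_sub_right, form_smul_right, ha', ha, hb, form_self s₁ h₁]
    decide
  have h2v : form s₂.val v.val = 9 := by
    rw [hv, h1z, hz, h0y, hy, h2x, hx]
    simp only [form_sub_right, form_smul_right, ha, hb', hb, h02', h02, form_self s₂ h₂]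
    decide
  have hsw : s₃ = w := by
    ext i j
    have rel' := congrFun (congrFun rel i) j
    rw [hw, h2v, hv, h1z, hz, h0y, hy, h2x, hx, ha]
    simp only [Matrix.sub_apply, Matrix.smul_apply, Matrix.add_apply, smul_eq_mul] at rel' ⊢
    grind
  rwa [hsw]

/-! ### String C-group representations -/

/-- An involution lifts to a traceless matrix, whose sign can be chosen so that its inner product
with a given `X` lies in `{0, …, 5}`. -/
theorem IsCover.exists_lift (hφ : IsCover φ) {g : G} (hg : IsInvolution g) (X : M) :
    ∃ s : S, φ s = g ∧ Pure s.val ∧ (form s.val X).val ≤ 5 := by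
  obtain ⟨s, rfl⟩ := hφ.1 g
  have hs := hφ.pure_of_involution hg.1 hg.2
  have key : ∀ k : K, k.val ≤ 5 ∨ (-k).val ≤ 5 := by decide
  rcases key (form s.val X) with h | h
  · exact ⟨s, rfl, hs, h⟩
  · refine ⟨-s, hφ.map_neg s, ?_, ?_⟩
    · exact hs.neg
    · rw [← form_neg_left] at h; exact h

/-- The only consequence of the intersection property that is needed: no generator lies in the
subgroup generated by others. -/
theorem independent {r : ℕ} {ρ : Fin r → G} (h : IsStringCRep ρ) {J : Set (Fin r)} {i : Fin r}
    (hi : i ∉ J) : ρ i ∉ Subgroup.closure (ρ '' J) := by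
  intro hm
  have h1 : ρ i ∈ Subgroup.closure (ρ '' {i}) ⊓ Subgroup.closure (ρ '' J) :=
    ⟨Subgroup.subset_closure ⟨i, rfl, rfl⟩, hm⟩
  rw [h.2.2.2, Set.singleton_inter_eq_empty.mpr hi, Set.image_empty, Subgroup.closure_empty,
    Subgroup.mem_bot] at h1
  exact (h.1 i).1 h1

theorem IsStringCRep.ne {r : ℕ} {ρ : Fin r → G} (h : IsStringCRep ρ) {i j : Fin r} (hij : i ≠ j) :
    ρ i ≠ ρ j := by
  intro e
  refine independent h (J := {j}) hij (e ▸ ?_)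
  exact Subgroup.subset_closure ⟨j, rfl, rfl⟩

theorem orthogonal (hφ : IsCover φ) {r : ℕ} {ρ : Fin r → G} (h : IsStringCRep ρ) {i j : Fin r}
    (hij : (i : ℕ) + 1 < j) {s t : S} (hs : φ s = ρ i) (ht : φ t = ρ j) :
    form s.val t.val = 0 := by
  apply hφ.form_eq_zero_of_commute
  · rw [hs, ht]; exact IsStringCRep.ne h (by rintro rfl; omega)
  · rw [ht]; exact (h.1 j).2
  · rw [hs, ht]; exact h.2.1 i j (Or.inl hij)

theorem no_rank_five (hφ : IsCover φ) (ρ : Fin 5 → G) (h : IsStringCRep ρ) : False := by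
  choose s hs ps _ using fun i => hφ.exists_lift (h.1 i) 0
  have hne : ∀ i j, i ≠ j → s i ≠ s j ∧ s i ≠ -s j := fun i j hij =>
    hφ.ne_of_ne (by rw [hs, hs]; exact IsStringCRep.ne h hij)
  have ho : ∀ i j : Fin 5, (i : ℕ) + 1 < j → form (s i).val (s j).val = 0 := fun i j hij =>
    orthogonal hφ h hij (hs i) (hs j)
  rcases eq_or_neg_of_orthogonal (ps 0) (ps 1) (ps 3) (ps 4) (ho 0 3 (by decide))
    (ho 0 4 (by decide)) (ho 1 3 (by decide)) (ho 1 4 (by decide)) (hne 0 1 (by decide)).1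
    (hne 0 1 (by decide)).2 with e | e
  exacts [(hne 3 4 (by decide)).1 e, (hne 3 4 (by decide)).2 e]

/-- The solutions in `{0, …, 5}` of the Gram relation with no `ρᵢρᵢ₊₁` of order 1 or 11, and with
the orders of `ρ₀ρ₁` and `ρ₂ρ₃` also different from 2 and 6.  Inner products with square `3`, `4`,
`5`, `9` belong to products of order 3, 5, 5, 6. -/
theorem solutions : ∀ a b c : K, a.val ≤ 5 → b.val ≤ 5 → c.val ≤ 5 →
    b ^ 2 = (1 - a ^ 2) * (1 - c ^ 2) → a ≠ 0 → c ≠ 0 → a ^ 2 ≠ 1 → b ^ 2 ≠ 1 → c ^ 2 ≠ 1 →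
    a ^ 2 ≠ 9 → c ^ 2 ≠ 9 →
    (a ^ 2 = 3 ∧ b ^ 2 = 4 ∧ c ^ 2 = 3) ∨ (a = 2 ∧ b = 3 ∧ c = 2) ∨
      (a = 4 ∧ b = 4 ∧ c = 4) := by
  decide

theorem rank_four (hφ : IsCover φ) (ρ : Fin 4 → G) (h : IsStringCRep ρ) :
    orderOf (ρ 0 * ρ 1) = 3 ∧ orderOf (ρ 1 * ρ 2) = 5 ∧ orderOf (ρ 2 * ρ 3) = 3 := by
  obtain ⟨s₁, e₁, p₁, -⟩ := hφ.exists_lift (h.1 1) 0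
  obtain ⟨s₀, e₀, p₀, q₀⟩ := hφ.exists_lift (h.1 0) s₁.val
  obtain ⟨s₂, e₂, p₂, q₂⟩ := hφ.exists_lift (h.1 2) s₁.val
  obtain ⟨s₃, e₃, p₃, q₃⟩ := hφ.exists_lift (h.1 3) s₂.val
  rw [form_comm] at q₂ q₃
  have h02 := orthogonal hφ h (i := 0) (j := 2) (by decide) e₀ e₂
  have h03 := orthogonal hφ h (i := 0) (j := 3) (by decide) e₀ e₃
  have h13 := orthogonal hφ h (i := 1) (j := 3) (by decide) e₁ e₃
  have n01 : s₀ ≠ s₁ ∧ s₀ ≠ -s₁ := hφ.ne_of_ne (by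
    rw [e₀, e₁]; exact IsStringCRep.ne h (by decide))
  have n12 : s₁ ≠ s₂ ∧ s₁ ≠ -s₂ := hφ.ne_of_ne (by
    rw [e₁, e₂]; exact IsStringCRep.ne h (by decide))
  have n23 : s₂ ≠ s₃ ∧ s₂ ≠ -s₃ := hφ.ne_of_ne (by
    rw [e₂, e₃]; exact IsStringCRep.ne h (by decide))
  have n02 : s₀ ≠ s₂ ∧ s₀ ≠ -s₂ := hφ.ne_of_ne (by
    rw [e₀, e₂]; exact IsStringCRep.ne h (by decide))
  have n13 : s₁ ≠ s₃ ∧ s₁ ≠ -s₃ := hφ.ne_of_ne (by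
    rw [e₁, e₃]; exact IsStringCRep.ne h (by decide))
  have mem : ∀ {J : Set (Fin 4)} (i : Fin 4) {s : S}, φ s = ρ i → i ∈ J →
      φ s ∈ Subgroup.closure (ρ '' J) := fun i s e hi =>
    e ▸ Subgroup.subset_closure ⟨i, hi, rfl⟩
  have out₃ : φ s₃ ∉ Subgroup.closure (ρ '' {0, 1, 2}) := e₃ ▸ independent h (by simp)
  have out₀ : φ s₀ ∉ Subgroup.closure (ρ '' {1, 2, 3}) := e₀ ▸ independent h (by simp)
  have gram := gram_relation p₀ p₁ p₂ p₃ rfl rfl rfl h02 h03 h13 n01.1 n01.2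
  -- If `ρ₀` and `ρ₁` commute, then `ρ₀ = ρ₁ρ₃`.
  have a0 : form s₀.val s₁.val ≠ 0 := fun e => out₀ <|
    hφ.mem_of_orthogonal p₁ p₃ p₀ h13 (by rw [form_comm, e]) (by rw [form_comm, h03])
      (mem 1 e₁ (by simp)) (mem 3 e₃ (by simp)) n13.1 n13.2
  -- If `ρ₂` and `ρ₃` commute, then `ρ₃ = ρ₀ρ₂`.
  have c0 : form s₂.val s₃.val ≠ 0 := fun e => out₃ <|
    hφ.mem_of_orthogonal p₀ p₂ p₃ h02 h03 e
      (mem 0 e₀ (by simp)) (mem 2 e₂ (by simp)) n02.1 n02.2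
  have a9 : form s₀.val s₁.val ^ 2 ≠ 9 := fun e => out₃ <|
    hφ.mem_of_trace_sq_eq_three p₀ p₁ p₃ e h03 h13
      (mem 0 e₀ (by simp)) (mem 1 e₁ (by simp)) n01.1 n01.2
  have c9 : form s₂.val s₃.val ^ 2 ≠ 9 := fun e => out₀ <|
    hφ.mem_of_trace_sq_eq_three p₂ p₃ p₀ e (by rw [form_comm, h02]) (by rw [form_comm, h03])
      (mem 2 e₂ (by simp)) (mem 3 e₃ (by simp)) n23.1 n23.2
  rcases solutions _ _ _ q₀ q₂ q₃ gram a0 c0 (sq_form_ne_one p₀ p₁ n01.1 n01.2)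
    (sq_form_ne_one p₁ p₂ n12.1 n12.2) (sq_form_ne_one p₂ p₃ n23.1 n23.2) a9 c9 with
    ⟨ha, hb, hc⟩ | ⟨ha, hb, hc⟩ | ⟨ha, hb, hc⟩
  · have hne : ∀ i j, i ≠ j → ρ i * ρ j ≠ 1 := fun i j hij e =>
      IsStringCRep.ne h hij (mul_right_cancel (e.trans (h.1 j).2.symm))
    rw [← e₀, ← e₁, ← e₂, ← e₃]
    refine ⟨hφ.orderOf_eq_three ?_ ha, hφ.orderOf_eq_five ?_ hb, hφ.orderOf_eq_three ?_ hc⟩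
    · rw [e₀, e₁]; exact hne _ _ (by decide)
    · rw [e₁, e₂]; exact hne _ _ (by decide)
    · rw [e₂, e₃]; exact hne _ _ (by decide)
  · exact absurd (IsCover.mem_of_type_565 p₀ p₁ p₂ p₃ ha hb hc h02 h03 h13 n01.1 n01.2
      (mem 0 e₀ (by simp)) (mem 1 e₁ (by simp)) (mem 2 e₂ (by simp))) out₃
  · exact absurd (IsCover.mem_of_type_555 p₀ p₁ p₂ p₃ ha hb hc h02 h03 h13 n01.1 n01.2
      (mem 0 e₀ (by simp)) (mem 1 e₁ (by simp)) (mem 2 e₂ (by simp))) out₃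

theorem exists_cover (e : G ≃* PSL2_11) : ∃ φ : S →* G, IsCover φ := by
  refine ⟨e.symm.toMonoidHom.comp (QuotientGroup.mk' (Subgroup.center S)), ?_, fun s => ?_⟩
  · exact e.symm.surjective.comp (QuotientGroup.mk'_surjective _)
  · rw [← mk_eq_one_iff]
    exact e.symm.map_eq_one_iff

end Cover

end ElevenCell

/-- If `G ≅ PSL₂(11)` has a string C-group representation of
rank `r ∈ {4,5}`, then `r = 4` and the Schläfli type is `(3,5,3)`:
the only abstract regular polytope of rank 4 or 5 for `PSL₂(11)` is the 11-cell. -/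
theorem statement1 {G : Type*} [Group G] (hiso : Nonempty (G ≃* PSL2_11))
    {r : ℕ} (hr : r = 4 ∨ r = 5) (ρ : Fin r → G) (hrep : IsStringCRep ρ) :
    r = 4 ∧
    orderOf (ρ ⟨0, by omega⟩ * ρ ⟨1, by omega⟩) = 3 ∧
    orderOf (ρ ⟨1, by omega⟩ * ρ ⟨2, by omega⟩) = 5 ∧
    orderOf (ρ ⟨2, by omega⟩ * ρ ⟨3, by omega⟩) = 3 := by
  obtain ⟨e⟩ := hiso
  obtain ⟨φ, hφ⟩ := ElevenCell.exists_cover e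
  rcases hr with rfl | rfl
  · exact ⟨rfl, ElevenCell.rank_four hφ ρ hrep⟩
  · exact (ElevenCell.no_rank_five hφ ρ hrep).elim
end

section
/- Consider the following four permutations of the set {1, 2, …, 11}: ρ_0 = (1 2)(5 6)(8 9)(10 11), ρ_1 = (2 3)(4 5)(7 8)(10 11), ρ_2 = (3 4)(5 6)(8 10)(9 11), ρ_3 = (4 7)(5 8)(6 9)(10 11). Then (⟨ρ_0,ρ_1,ρ_2,ρ_3⟩, (ρ_0,ρ_1,ρ_2,ρ_3)) is a string C-group of rank 4, the group G = ⟨ρ_0,ρ_1,ρ_2,ρ_3⟩ is transitive on the 11 points, consists of even permutations, and is isomorphic to PSL₂(11), and the Schläfli type is (3,5,3). (This is the faithful transitive permutation representation of the 11-cell.) -/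
/-!
The isomorphism with `PSL₂(11)` comes from the exceptional action of `SL(2, 11)` on eleven points.
By the Bruhat decomposition, an action on `ZMod 11` in which upper triangular matrices act by affine
maps `x ↦ a² x + a b` is determined by the involution `w` by which `S = !![0, -1; 1, 0]` acts, and
this gives a closed formula `act g x`. That the formula is multiplicative reduces, since the upper
transvections and `S` generate (`T_S_induction`), to the three identities `w_w`, `w_sq_mul` and
`w_braid` for the function `w`. An element acting trivially is upper triangular, as `w` is not affine,
and is then `±1`, so the kernel is the center (`ker_rep`). After relabelling the points, the generators
`T 1` and `S` act as words in the `ρ i`, and each `ρ i` is the action of a matrix, so the image is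
exactly the group of the 11-cell (`range_rep`).

For the intersection property, `ρ j` with `j ≠ i` leaves invariant a set `B i` of points: `{1}`,
`{1, 2}`, `{1, 2, 3}`, `{1, …, 6}` for `i = 0, 1, 2, 3`. In a proper parabolic subgroup
`⟨ρ j : j ∈ J⟩` (of order at most 60) the stabilizer of `B i` is `⟨ρ j : j ∈ J, j ≠ i⟩`, which is
checked by enumeration (`elts_spec`). An element of `⟨ρ j : j ∈ J⟩ ∩ ⟨ρ k : k ∈ K⟩` stabilizes `B i`
for every `i ∉ K`, so the indices of `J` outside `K` can be discarded one after the other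
(`inter_le`). If `J` is the whole index set, there is nothing to prove.
-/

open Equiv

/-- A string group generated by involutions (sggi). -/
def Sggi {G : Type*} [Group G] {r : ℕ} (ρ : Fin r → G) : Prop :=
  (∀ i, IsInvolution (ρ i)) ∧ StringCommuting ρ

/-- A subgroup of `Perm Ω` is transitive. -/
def IsTransitiveSubgroup {Ω : Type*} (H : Subgroup (Perm Ω)) : Prop :=
  ∀ x y : Ω, ∃ g ∈ H, g x = y

/-- The four generators of the 11-cell, as permutations of `Fin 11`.
The point `k : Fin 11` represents the point `k + 1` of `{1, …, 11}`:
`ρ₀ = (1 2)(5 6)(8 9)(10 11)`, `ρ₁ = (2 3)(4 5)(7 8)(10 11)`,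
`ρ₂ = (3 4)(5 6)(8 10)(9 11)`, `ρ₃ = (4 7)(5 8)(6 9)(10 11)`. -/
def elevenCellGens : Fin 4 → Perm (Fin 11) :=
  ![Equiv.swap 0 1 * Equiv.swap 4 5 * Equiv.swap 7 8 * Equiv.swap 9 10,
    Equiv.swap 1 2 * Equiv.swap 3 4 * Equiv.swap 6 7 * Equiv.swap 9 10,
    Equiv.swap 2 3 * Equiv.swap 4 5 * Equiv.swap 7 9 * Equiv.swap 8 10,
    Equiv.swap 3 6 * Equiv.swap 4 7 * Equiv.swap 5 8 * Equiv.swap 9 10]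

/-! ### The intersection property -/

/-- `cut i` is the size of the initial segment `B i` of `Fin 11` (in the numbering `1, …, 11`:
`{1}`, `{1, 2}`, `{1, 2, 3}`, `{1, …, 6}`) that is invariant under every `ρ j` with `j ≠ i`. These
four segments are the point sets of a base flag (vertex, edge, face, cell) of the 11-cell. -/
def cut : Fin 4 → Fin 12 := ![1, 2, 3, 6]

/-- A permutation recorded as the list of its values, which is what the kernel computes with. -/
def table (g : Perm (Fin 11)) : List (Fin 11) := (List.finRange 11).map g

theorem table_injective : Function.Injective table := fun _ _ hgh =>
  Equiv.ext fun x => List.map_inj_left.mp hgh x (List.mem_finRange x)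

theorem table_mul (g h : Perm (Fin 11)) : table (g * h) = (table h).map g := by
  simp [table]

/-- Exhaustive search along left multiplication by the generators `ρ j`, `j ∈ gs`: `todo` is the
stack of tables to visit, `seen` the list of tables found so far, and the natural number bounds the
number of steps. -/
def enum (gs : List (Fin 4)) :
    ℕ → List (List (Fin 11)) → List (List (Fin 11)) → List (List (Fin 11))
  | 0, _, seen => seen
  | _ + 1, [], seen => seen
  | n + 1, t :: todo, seen =>
    if t ∈ seen then enum gs n todo seen
    else enum gs n (gs.map (fun j => t.map (elevenCellGens j)) ++ todo) (t :: seen)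

/-- The tables of the elements of `⟨ρ j : j ∈ J⟩`, for `J` a proper subset of the index set: these
subgroups have at most 60 elements, so 300 steps are enough for the search to terminate. -/
def elts (J : Finset (Fin 4)) : List (List (Fin 11)) :=
  enum ((List.finRange 4).filter (· ∈ J)) 300 [List.finRange 11] []

theorem gens_mul_self (j : Fin 4) : elevenCellGens j * elevenCellGens j = 1 := by
  revert j; decide

/-- The generators being involutions, each element of `⟨ρ j : j ∈ J⟩` is a positive word in them. -/
theorem gens_induction {J : Set (Fin 4)} {P : Perm (Fin 11) → Prop} (one : P 1)
    (mul : ∀ j ∈ J, ∀ g, P g → P (elevenCellGens j * g)) {g : Perm (Fin 11)}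
    (hg : g ∈ Subgroup.closure (elevenCellGens '' J)) : P g := by
  induction hg using Subgroup.closure_induction_left with
  | one => exact one
  | mul_left x hx y _ ih =>
    obtain ⟨j, hj, rfl⟩ := hx
    exact mul j hj y ih
  | inv_mul_cancel x hx y _ ih =>
    obtain ⟨j, hj, rfl⟩ := hx
    rw [inv_eq_of_mul_eq_one_left (gens_mul_self j)]
    exact mul j hj y ih

theorem enum_sound (H : Subgroup (Perm (Fin 11))) (gs : List (Fin 4))
    (hgs : ∀ j ∈ gs, elevenCellGens j ∈ H) (n : ℕ) (todo seen : List (List (Fin 11)))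
    (htodo : ∀ t ∈ todo, ∃ g ∈ H, table g = t) (hseen : ∀ t ∈ seen, ∃ g ∈ H, table g = t) :
    ∀ t ∈ enum gs n todo seen, ∃ g ∈ H, table g = t := by
  induction n generalizing todo seen with
  | zero => exact hseen
  | succ n ih =>
    cases todo with
    | nil => exact hseen
    | cons t todo =>
      have ht := htodo t List.mem_cons_self
      have htodo' := fun s hs => htodo s (List.mem_cons_of_mem t hs)
      rw [enum]
      split_ifs with h
      · exact ih _ _ htodo' hseen
      · refine ih _ _ (fun s hs => ?_) (fun s hs => ?_)
        · rcases List.mem_append.mp hs with hs | hs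
          · obtain ⟨j, hj, rfl⟩ := List.mem_map.mp hs
            obtain ⟨g, hg, rfl⟩ := ht
            exact ⟨_, H.mul_mem (hgs j hj) hg, table_mul _ _⟩
          · exact htodo' s hs
        · rcases List.mem_cons.mp hs with rfl | hs
          · exact ht
          · exact hseen s hs

theorem mem_closure_of_table_mem {J : Finset (Fin 4)} {g : Perm (Fin 11)}
    (hg : table g ∈ elts J) : g ∈ Subgroup.closure (elevenCellGens '' J) := by
  obtain ⟨h, hh, heq⟩ := enum_sound (Subgroup.closure (elevenCellGens '' J)) _
    (fun j hj => Subgroup.subset_closure ⟨j, by simpa using hj, rfl⟩) _ _ []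
    (fun t ht => ⟨1, one_mem _, by simpa [table] using (List.mem_singleton.mp ht).symm⟩)
    (by simp) _ hg
  rwa [← table_injective heq]

set_option maxRecDepth 100000 in
/-- For a proper subset `J`, the list `elts J` is complete, being closed under left multiplication by
the generators; and the stabilizer of `B i` in `⟨ρ j : j ∈ J⟩` is `⟨ρ j : j ∈ J, j ≠ i⟩`. -/
theorem elts_spec : ∀ J : Finset (Fin 4), J ≠ Finset.univ →
    List.finRange 11 ∈ elts J ∧
    (∀ t ∈ elts J, ∀ j ∈ J, t.map (elevenCellGens j) ∈ elts J) ∧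
    ∀ i ∈ J, ∀ t ∈ elts J, (∀ y ∈ t.take (cut i), y.val < cut i) → t ∈ elts (J.erase i) := by
  decide +kernel

theorem table_mem_of_mem_closure {J : Finset (Fin 4)} (hJ : J ≠ Finset.univ) {g : Perm (Fin 11)}
    (hg : g ∈ Subgroup.closure (elevenCellGens '' J)) : table g ∈ elts J := by
  refine gens_induction (P := fun g => table g ∈ elts J) ?_ (fun j hj g hg => ?_) hg
  · simpa [table] using (elts_spec J hJ).1
  · rw [table_mul]
    exact (elts_spec J hJ).2.1 _ hg j hj

/-- `B i` is invariant under all generators except `ρ i`. -/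
theorem stabilizes_cut {K : Set (Fin 4)} {i : Fin 4} (hi : i ∉ K) {g : Perm (Fin 11)}
    (hg : g ∈ Subgroup.closure (elevenCellGens '' K)) :
    ∀ x : Fin 11, x.val < cut i → (g x).val < cut i := by
  have key : ∀ i j : Fin 4, j ≠ i → ∀ x : Fin 11, x.val < cut i →
      (elevenCellGens j x).val < cut i := by decide
  refine gens_induction (P := fun g => ∀ x : Fin 11, x.val < cut i → (g x).val < cut i)
    (fun x hx => hx) (fun j hj g ih x hx => ?_) hg
  exact key i j (fun h => hi (h ▸ hj)) _ (ih x hx)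

theorem mem_take_finRange : ∀ (i : Fin 4), ∀ x ∈ (List.finRange 11).take (cut i),
    x.val < cut i := by decide

/-- The indices of `J` outside `K` are removed one at a time, each by means of the corresponding
`B i`. -/
theorem inter_le (K : Set (Fin 4)) (g : Perm (Fin 11))
    (hgK : g ∈ Subgroup.closure (elevenCellGens '' K)) (n : ℕ) :
    ∀ J : Finset (Fin 4), J.card = n → J ≠ Finset.univ →
      g ∈ Subgroup.closure (elevenCellGens '' J) →
      g ∈ Subgroup.closure (elevenCellGens '' (J ∩ K)) := by
  induction n with
  | zero =>
    intro J hJ _ hg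
    rw [Finset.card_eq_zero.mp hJ] at hg ⊢
    simpa using hg
  | succ n ih =>
    intro J hJ hne hg
    by_cases hJK : (J : Set (Fin 4)) ⊆ K
    · rwa [Set.inter_eq_left.mpr hJK]
    · obtain ⟨i, hiJ, hiK⟩ := Set.not_subset.mp hJK
      have h1 : table g ∈ elts (J.erase i) := by
        refine (elts_spec J hne).2.2 i hiJ _ (table_mem_of_mem_closure hne hg) (fun y hy => ?_)
        rw [table, ← List.map_take] at hy
        obtain ⟨x, hx, rfl⟩ := List.mem_map.mp hy
        exact stabilizes_cut hiK hgK x (mem_take_finRange i x hx)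
      have h2 := ih (J.erase i) (by rw [Finset.card_erase_of_mem hiJ, hJ]; rfl)
        (fun h => Finset.notMem_erase i J (h ▸ Finset.mem_univ i)) (mem_closure_of_table_mem h1)
      refine Subgroup.closure_mono (Set.image_mono (Set.inter_subset_inter_left K ?_)) h2
      exact_mod_cast Finset.erase_subset i J

theorem intersectionProperty : IntersectionProperty elevenCellGens := by
  classical
  intro J K
  apply le_antisymm
  · rintro g ⟨hJ, hK⟩
    by_cases h : J = Set.univ
    · simpa [h] using hK
    · have := inter_le K g hK _ J.toFinset rfl (by simpa using h) (by simpa using hJ)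
      simpa using this
  · exact le_inf (Subgroup.closure_mono (Set.image_mono Set.inter_subset_left))
      (Subgroup.closure_mono (Set.image_mono Set.inter_subset_right))

/-! ### The action of `SL(2, 11)` on eleven points -/

/-- The special linear group over the field with eleven elements. -/
abbrev SL := Matrix.SpecialLinearGroup (Fin 2) (ZMod 11)

instance : Fact (Nat.Prime 11) := ⟨by norm_num⟩

/-- The upper transvection `z ↦ z + t`. -/
def T (t : ZMod 11) : SL := ⟨!![1, t; 0, 1], by simp [Matrix.det_fin_two]⟩

/-- The element `z ↦ -1 / z`. -/
def S : SL := ⟨!![0, -1; 1, 0], by simp [Matrix.det_fin_two]⟩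

theorem det_eq (g : SL) : g 0 0 * g 1 1 - g 0 1 * g 1 0 = 1 := by
  rw [← Matrix.det_fin_two]; exact g.det_coe

theorem mul_entry (g h : SL) (i j : Fin 2) : (g * h) i j = g i 0 * h 0 j + g i 1 * h 1 j := by
  rw [Matrix.SpecialLinearGroup.coe_mul, Matrix.mul_apply, Fin.sum_univ_two]

theorem T_entries (t : ZMod 11) : T t 0 0 = 1 ∧ T t 0 1 = t ∧ T t 1 0 = 0 ∧ T t 1 1 = 1 :=
  ⟨rfl, rfl, rfl, rfl⟩

theorem S_entries : S 0 0 = 0 ∧ S 0 1 = -1 ∧ S 1 0 = 1 ∧ S 1 1 = 0 := ⟨rfl, rfl, rfl, rfl⟩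

theorem SL_ext {g h : SL} (h00 : g 0 0 = h 0 0) (h01 : g 0 1 = h 0 1) (h10 : g 1 0 = h 1 0)
    (h11 : g 1 1 = h 1 1) : g = h := by
  ext i j
  fin_cases i <;> fin_cases j <;> assumption

/-- `SL(2, 11)` is generated, as a monoid, by `S` and the upper transvections. -/
theorem T_S_induction {P : SL → Prop} (hT : ∀ t, P (T t)) (hS : P S)
    (hmul : ∀ x y, P x → P y → P (x * y)) (g : SL) : P g := by
  -- If `c ≠ 0`, then `g` is upper · lower · upper, and lower transvections are conjugate to upper
  -- ones by `S`, whose inverse is `S ^ 3`.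
  have h1 : ∀ g : SL, g 1 0 ≠ 0 → P g := by
    intro g hc
    have hdet := det_eq g
    have : g = T ((g 0 0 - 1) / g 1 0) * (S * (T (-g 1 0) * (S * (S * S)))) *
        T ((g 1 1 - 1) / g 1 0) := by
      apply SL_ext <;> simp [mul_entry, T_entries, S_entries] <;> field_simp <;>
        first | ring1 | linear_combination -hdet
    rw [this]
    exact hmul _ _ (hmul _ _ (hT _) (hmul _ _ hS (hmul _ _ (hT _) (hmul _ _ hS (hmul _ _ hS hS)))))
      (hT _)
  by_cases hc : g 1 0 = 0
  · have hd : g 1 1 ≠ 0 := by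
      intro hd
      have hdet := det_eq g
      simp [hc, hd] at hdet
    have : g = (g * S) * (S * (S * S)) := by
      apply SL_ext <;> simp [mul_entry, S_entries]
    rw [this]
    exact hmul _ _ (h1 _ (by simpa [mul_entry, S_entries] using hd))
      (hmul _ _ hS (hmul _ _ hS hS))
  · exact h1 g hc

/-- The involution `(2 10)(3 4)(5 9)(6 7)` of `ZMod 11` by which `S` acts. -/
def w : ZMod 11 → ZMod 11 := ![0, 1, 10, 4, 3, 9, 7, 6, 8, 5, 2]

theorem w_w : ∀ x, w (w x) = x := by decide

theorem w_sq_mul : ∀ a d : ZMod 11, a * d = 1 → ∀ x, w (d ^ 2 * x) = a ^ 2 * w x := by decide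

/-- The relation `(T S)³ = 1`, rescaled by diagonal matrices. -/
theorem w_braid : ∀ c c' : ZMod 11, c * c' = 1 → ∀ d d' : ZMod 11, d * d' = 1 → ∀ x,
    w (d ^ 2 * x - d * c) = c' * d' + w (c ^ 2 * w x + c * d) := by decide +kernel

/-- Matrices with a nonzero lower left entry therefore act nontrivially. -/
theorem w_not_affine : ∀ k m : ZMod 11, ¬ ∀ x, w x = k * x + m := by decide

/-- The action of a matrix with rows `a b` and `c d` on `ZMod 11`. By the Bruhat decomposition, it is
forced once `T t` acts as `x ↦ x + t`, the diagonal matrix of `a, a⁻¹` as `x ↦ a² x`, and `S`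
as `w`. -/
def act (g : SL) : Function.End (ZMod 11) := fun x =>
  if g 1 0 = 0 then g 0 0 ^ 2 * x + g 0 0 * g 0 1
  else g 0 0 * (g 1 0)⁻¹ + w (g 1 0 ^ 2 * x + g 1 0 * g 1 1)

theorem act_one : act 1 = 1 := by
  funext x
  change act 1 x = x
  simp [act]

theorem act_T (t x : ZMod 11) : act (T t) x = x + t := by
  simp [act, T_entries]

theorem act_S (x : ZMod 11) : act S x = w x := by
  simp [act, S_entries]

theorem act_mul_T (g : SL) (t x : ZMod 11) : act (g * T t) x = act g (x + t) := by
  by_cases hc : g 1 0 = 0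
  · simp only [act, mul_entry, T_entries, hc, if_true, mul_one, mul_zero, add_zero,
      zero_mul]
    ring
  · simp only [act, mul_entry, T_entries, hc, if_false, mul_one, mul_zero, add_zero]
    ring_nf

theorem act_mul_S (g : SL) (x : ZMod 11) : act (g * S) x = act g (w x) := by
  have hdet := det_eq g
  have h0 : (g * S) 0 0 = g 0 1 := by simp [mul_entry, S_entries]
  have h1 : (g * S) 0 1 = - g 0 0 := by simp [mul_entry, S_entries]
  have h2 : (g * S) 1 0 = g 1 1 := by simp [mul_entry, S_entries]
  have h3 : (g * S) 1 1 = - g 1 0 := by simp [mul_entry, S_entries]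
  simp only [act, h0, h1, h2, h3]
  generalize g 0 0 = a at *
  generalize g 0 1 = b at *
  generalize g 1 0 = c at *
  generalize g 1 1 = d at *
  by_cases hc : c = 0
  · subst hc
    have had : a * d = 1 := by linear_combination hdet
    have hd : d ≠ 0 := by rintro rfl; simp at had
    have hinv : d⁻¹ = a := inv_eq_of_mul_eq_one_left had
    simp only [if_neg hd, if_true, hinv]
    rw [show d ^ 2 * x + d * -0 = d ^ 2 * x by ring, w_sq_mul a d had]
    ring
  · by_cases hd : d = 0
    · subst hd
      have hbc : -b * c = 1 := by linear_combination hdet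
      have hinv : c⁻¹ = -b := inv_eq_of_mul_eq_one_left hbc
      simp only [if_neg hc, if_true, hinv]
      rw [mul_zero, add_zero, w_sq_mul (-b) c hbc, w_w]
      ring
    · simp only [if_neg hc, if_neg hd]
      rw [show d ^ 2 * x + d * -c = d ^ 2 * x - d * c by ring,
        w_braid c c⁻¹ (mul_inv_cancel₀ hc) d d⁻¹ (mul_inv_cancel₀ hd)]
      field_simp
      linear_combination -hdet

/-- The action is multiplicative, because it is so for right factors `T t` and `S`. -/
theorem act_mul (g h : SL) : act (g * h) = act g * act h := by
  revert g
  refine T_S_induction (P := fun h => ∀ g, act (g * h) = act g * act h) ?_ ?_ ?_ h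
  · intro t g
    funext x
    change _ = act g (act (T t) x)
    rw [act_mul_T, act_T]
  · intro g
    funext x
    change _ = act g (act S x)
    rw [act_mul_S, act_S]
  · intro x y hx hy g
    rw [← mul_assoc, hy, hx, hy x, mul_assoc]

/-- The identification of the points of the 11-cell with `ZMod 11` under which
`ρ₃ρ₂ρ₁ρ₂ρ₁ρ₀` becomes `x ↦ x + 1` and `ρ₀` becomes `w`. -/
def label : Fin 11 ≃ ZMod 11 where
  toFun := ![4, 3, 0, 8, 10, 2, 1, 9, 5, 7, 6]
  invFun := ![2, 6, 5, 1, 0, 8, 10, 9, 3, 7, 4]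
  left_inv x := by revert x; decide
  right_inv x := by revert x; decide

/-- The action of `SL(2, 11)` on the points of the 11-cell. -/
def rep : SL →* Perm (Fin 11) :=
  label.symm.permCongrHom.toMonoidHom.comp
    (MonoidHom.toHomPerm { toFun := act, map_one' := act_one, map_mul' := act_mul })

theorem rep_apply (g : SL) (x : Fin 11) : rep g x = label.symm (act g (label x)) := rfl

theorem ker_rep : rep.ker = Subgroup.center SL := by
  ext g
  have hmem : g ∈ rep.ker ↔ ∀ x, act g x = x := by
    rw [MonoidHom.mem_ker, Equiv.ext_iff]
    simp only [rep_apply, Perm.one_apply, Equiv.symm_apply_eq]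
    exact ⟨fun h x => by simpa using h (label.symm x), fun h x => h _⟩
  have hdet := det_eq g
  rw [hmem, Matrix.SpecialLinearGroup.mem_center_iff]
  constructor
  · intro h
    by_cases hc : g 1 0 = 0
    · simp only [act, hc, if_true] at h
      have hb := h 0
      have ha := h 1
      rw [hc] at hdet
      have ha0 : g 0 0 ≠ 0 := by intro h0; simp [h0] at hdet
      have hb0 : g 0 1 = 0 := by simpa [ha0] using hb
      have ha2 : g 0 0 ^ 2 = 1 := by simpa [hb0] using ha
      have had : g 0 0 = g 1 1 := mul_left_cancel₀ ha0 (by linear_combination ha2 - hdet)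
      refine ⟨g 0 0, by simpa using ha2, ?_⟩
      ext i j
      fin_cases i <;> fin_cases j <;> simp [hc, hb0, had]
    · simp only [act, hc, if_false] at h
      exfalso
      -- `w` would be affine, as one sees from `y = c² x + cd`.
      refine w_not_affine ((g 1 0)⁻¹ ^ 2)
        (-(g 1 1 * (g 1 0)⁻¹) - g 0 0 * (g 1 0)⁻¹) (fun y => ?_)
      have := h ((g 1 0)⁻¹ ^ 2 * (y - g 1 0 * g 1 1))
      rw [show g 1 0 ^ 2 * ((g 1 0)⁻¹ ^ 2 * (y - g 1 0 * g 1 1)) + g 1 0 * g 1 1 = y by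
        field_simp; ring] at this
      rw [← sub_eq_iff_eq_add'.mpr this.symm]
      field_simp
      ring
  · rintro ⟨r, hr, hg⟩ x
    have e : ∀ i j, g i j = Matrix.scalar (Fin 2) r i j := fun i j => by rw [hg]
    simp only [Fintype.card_fin] at hr
    simp [act, e, hr]

/-! ### The image of the representation -/

/-- The 11-cycle of `⟨ρ₀, ρ₁, ρ₂, ρ₃⟩` by which `T 1` acts. -/
def cyc : Perm (Fin 11) := elevenCellGens 3 * elevenCellGens 2 * elevenCellGens 1 *
  elevenCellGens 2 * elevenCellGens 1 * elevenCellGens 0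

theorem gens_mem (i : Fin 4) :
    elevenCellGens i ∈ Subgroup.closure (Set.range elevenCellGens) :=
  Subgroup.subset_closure ⟨i, rfl⟩

theorem cyc_mem : cyc ∈ Subgroup.closure (Set.range elevenCellGens) := by
  unfold cyc
  exact mul_mem (mul_mem (mul_mem (mul_mem (mul_mem (gens_mem _) (gens_mem _)) (gens_mem _))
    (gens_mem _)) (gens_mem _)) (gens_mem _)

theorem rep_T_one : rep (T 1) = cyc := by
  ext x : 1
  rw [rep_apply, act_T]
  revert x
  decide +kernel

theorem T_eq_pow (t : ZMod 11) : T t = T 1 ^ t.val := by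
  have h : ∀ n : ℕ, T 1 ^ n = T n := by
    intro n
    induction n with
    | zero =>
      apply SL_ext <;> simp [T_entries]
    | succ n ih =>
      rw [pow_succ, ih]
      apply SL_ext <;> simp [mul_entry, T_entries, add_comm]
  rw [h, ZMod.natCast_zmod_val]

theorem rep_S : rep S = elevenCellGens 0 := by
  ext x : 1
  rw [rep_apply, act_S]
  revert x
  decide +kernel

/-- Matrices acting as the four generators. -/
def gensSL : Fin 4 → SL :=
  ![S, ⟨!![3, 8; 7, 8], by decide⟩, ⟨!![4, 4; 4, 7], by decide⟩, ⟨!![3, 1; 1, 8], by decide⟩]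

theorem rep_gensSL (i : Fin 4) : rep (gensSL i) = elevenCellGens i := by
  -- The inverse of `ZMod 11` does not reduce in the kernel; the ninth power does.
  have hinv : ∀ c : ZMod 11, c ≠ 0 → c⁻¹ = c ^ 9 := fun c hc =>
    inv_eq_of_mul_eq_one_right ((by decide : ∀ c : ZMod 11, c ≠ 0 → c * c ^ 9 = 1) c hc)
  have hact : ∀ g x, act g x = if g 1 0 = 0 then g 0 0 ^ 2 * x + g 0 0 * g 0 1
      else g 0 0 * g 1 0 ^ 9 + w (g 1 0 ^ 2 * x + g 1 0 * g 1 1) := by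
    intro g x
    unfold act
    split_ifs with hc
    · rfl
    · rw [hinv _ hc]
  ext x : 1
  rw [rep_apply, hact]
  revert i x
  decide +kernel

theorem range_rep : rep.range = Subgroup.closure (Set.range elevenCellGens) := by
  apply le_antisymm
  · rintro _ ⟨g, rfl⟩
    refine T_S_induction
      (P := fun g => rep g ∈ Subgroup.closure (Set.range elevenCellGens)) ?_ ?_ ?_ g
    · intro t
      rw [T_eq_pow, map_pow, rep_T_one]
      exact pow_mem cyc_mem _
    · rw [rep_S]
      exact gens_mem 0
    · intro x y hx hy
      rw [map_mul]
      exact mul_mem hx hy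
  · rw [Subgroup.closure_le]
    rintro _ ⟨i, rfl⟩
    exact ⟨gensSL i, rep_gensSL i⟩

theorem closure_equiv :
    Nonempty (Subgroup.closure (Set.range elevenCellGens) ≃* PSL2_11) :=
  ⟨(MulEquiv.subgroupCongr range_rep.symm).trans
    ((QuotientGroup.quotientKerEquivRange rep).symm.trans
      (QuotientGroup.quotientMulEquivOfEq ker_rep))⟩

theorem closure_transitive :
    IsTransitiveSubgroup (Subgroup.closure (Set.range elevenCellGens)) := by
  intro x y
  have h : ∀ x y : Fin 11, ∃ n : Fin 11, (cyc ^ n.val) x = y := by decide +kernel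
  obtain ⟨n, hn⟩ := h x y
  exact ⟨cyc ^ n.val, pow_mem cyc_mem _, hn⟩

/-! ### The 11-cell -/

/-- The four permutations above form a string C-group of rank 4
on 11 points; the group they generate is transitive, consists of even
permutations, is isomorphic to `PSL₂(11)`, and the Schläfli type is `(3,5,3)`.
This is the faithful transitive permutation representation of the 11-cell. -/
theorem statement2 :
    Sggi elevenCellGens ∧
    IntersectionProperty elevenCellGens ∧
    IsTransitiveSubgroup (Subgroup.closure (Set.range elevenCellGens)) ∧
    (∀ i, Perm.sign (elevenCellGens i) = 1) ∧
    Nonempty ((Subgroup.closure (Set.range elevenCellGens)) ≃* PSL2_11) ∧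
    orderOf (elevenCellGens 0 * elevenCellGens 1) = 3 ∧
    orderOf (elevenCellGens 1 * elevenCellGens 2) = 5 ∧
    orderOf (elevenCellGens 2 * elevenCellGens 3) = 3 := by
  have : Fact (Nat.Prime 3) := ⟨by norm_num⟩
  have : Fact (Nat.Prime 5) := ⟨by norm_num⟩
  refine ⟨⟨?_, ?_⟩, intersectionProperty, closure_transitive, ?_, closure_equiv,
    orderOf_eq_prime (by decide +kernel) (by decide +kernel),
    orderOf_eq_prime (by decide +kernel) (by decide +kernel),
    orderOf_eq_prime (by decide +kernel) (by decide +kernel)⟩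
  · intro i
    exact ⟨by revert i; decide, gens_mul_self i⟩
  · unfold StringCommuting
    decide
  · decide
end

section
/- Let r ∈ {4,5} and let Γ = (G, (ρ_0, …, ρ_{r−1})) be an even transitive string C-group of degree 11 of rank r. Then for no index i ∈ {0, …, r−1} is the maximal parabolic subgroup G_i = ⟨ρ_j : j ≠ i⟩ isomorphic to PSL₂(11). -/
/-!
Let `H = G_i` and suppose `H ≅ PSL₂(11)`. The intersection property gives `ρ_i ∉ H`.

*Normal form.* Up to conjugacy, `Sym(11)` contains a unique subgroup isomorphic to `PSL₂(11)`.
The images in `H` of the unipotent `u`, the torus element `a = diag(3, 4)` and the Weyl element `t`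
satisfy `u¹¹ = 1`, `a u a⁻¹ = u⁹`, `t² = 1`, `a t a = t`, `(t u)³ = 1`, and the Bruhat decomposition
describes all of `H` in terms of them. As `u` is an 11-cycle it may be taken to be `x ↦ x + 1`;
then `a` may be taken to be `x ↦ 9 x`, which leaves two possibilities for `t`, exchanged by
`x ↦ -x` (`exists_good`). Hence the 55 involutions of `H` are explicit and form a single conjugacy
class, so one of the generators may be assumed to be `t` (`exists_good_conj`).

*Facts about `H`*, by inspection of the 55 involutions. No involution is central. If two
involutions `x, y` of `H` do not commute, then at most one involution of `H` commutes with both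
(`common_centralizer`). If moreover `(x y)³ ≠ 1`, then every even involution of `Sym(11)` commuting
with `x` and `y` equals `(x y)³`, so lies in `H` (`cube_of_pair`). If `(x y)³ = 1` and
`w ≠ x` is an involution of `H` commuting with `x`, then `(w y)³ ≠ 1` and `⟨x, y, w⟩` is
intransitive, hence proper in `H` (`triple`).

*Conclusion.* If `0 < i < r - 1`, then `H` is generated by two commuting sets of involutions. If one
of these sets has a single element, that element is central in `H`; the case `r = 5`, `i = 2` is
excluded by `common_centralizer`. If `i` is an end of the diagram, let `x, y, w, …` be the other
generators read from the far end, and `z = ρ_i`. Then `z` commutes with `x` and `y`, and `x y ≠ y x`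
as `x` is not central, so `z ∉ H` forces `(x y)³ = 1`. For `r = 4` this contradicts
`H = ⟨x, y, w⟩`. For `r = 5`, `z` also commutes with `w`; either `y w = w y`, and then the last two
generators both commute with `x` and `y`, or `(w y)³ = 1` too. Both are impossible.
-/

open Equiv

/-- The maximal parabolic subgroup `G_i = ⟨ρ_j : j ≠ i⟩`. -/
def Gi {r : ℕ} {Ω : Type*} (ρ : Fin r → Perm Ω) (i : Fin r) : Subgroup (Perm Ω) :=
  Subgroup.closure (ρ '' {j | j ≠ i})

/-! ### The normal form of a subgroup isomorphic to `PSL₂(11)` -/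

/-- The symmetric group on the 11 points. -/
abbrev P11 := Perm (Fin 11)

/-- The 11-cycle `x ↦ x + 1`, the normal form of a unipotent element. -/
def cRot : P11 := finRotate 11

/-- Multiplication by `9`, the normal form of a generator of the torus. -/
def aMul : P11 := ⟨fun x => 9 * x, fun x => 5 * x, by decide, by decide⟩

/-- The normal form of the Weyl element: `0 ↦ 0`, `x ↦ 1/x` on the nonzero squares mod 11 and
`x ↦ 9/x` on the non-squares. -/
def tInv : P11 :=
  ⟨![0, 1, 10, 4, 3, 9, 7, 6, 8, 5, 2], ![0, 1, 10, 4, 3, 9, 7, 6, 8, 5, 2], by decide, by decide⟩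

/-- The other solution of the relations in `t_unique`, conjugate to `tInv` by `negP`. -/
def tInv' : P11 :=
  ⟨![0, 9, 6, 3, 5, 4, 2, 8, 7, 1, 10], ![0, 9, 6, 3, 5, 4, 2, 8, 7, 1, 10], by decide, by decide⟩

/-- The permutation `x ↦ -x`. -/
def negP : P11 := ⟨fun x => -x, fun x => -x, by decide, by decide⟩

/-- A generator of the upper unipotent subgroup. -/
def mU : SL := ⟨!![1, 1; 0, 1], by decide⟩
/-- The torus element `diag(3, 3⁻¹)`, of order 5; with `-1` it generates the torus. -/
def mA : SL := ⟨!![3, 0; 0, 4], by decide⟩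
/-- The Weyl element. -/
def mT : SL := ⟨!![0, -1; 1, 0], by decide⟩

/-- The diagonal matrix `diag(s, s⁻¹)`. -/
def mD (s : ZMod 11) (hs : s ≠ 0) : SL := ⟨!![s, 0; 0, s⁻¹], by
  simp [Matrix.det_fin_two, hs]⟩

/-- The upper unipotent matrix with entry `i`. -/
def mE (i : ZMod 11) : SL := ⟨!![1, i; 0, 1], by simp [Matrix.det_fin_two]⟩

lemma mU_pow (n : ℕ) : mU ^ n = mE n := by
  induction n with
  | zero => apply Subtype.ext; simp [mE, Matrix.one_fin_two]
  | succ n ih =>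
    rw [pow_succ, ih]
    apply Subtype.ext
    rw [Matrix.SpecialLinearGroup.coe_mul]
    simp [mE, mU, add_comm]

lemma mD_eq (s : ZMod 11) (hs : s ≠ 0) : ∃ j : ℕ, mD s hs = mA ^ j ∨ mD s hs = -1 * mA ^ j := by
  have key : ∀ s : ZMod 11, s ≠ 0 → ∃ j : Fin 5,
      ((3 : ZMod 11) ^ (j : ℕ) = s ∧ (4 : ZMod 11) ^ (j : ℕ) * s = 1) ∨
      ((3 : ZMod 11) ^ (j : ℕ) = -s ∧ -(4 : ZMod 11) ^ (j : ℕ) * s = 1) := by decide +kernel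
  have hpow : ∀ n : ℕ, ((mA ^ n : SL) : Matrix (Fin 2) (Fin 2) (ZMod 11)) =
      !![3 ^ n, 0; 0, 4 ^ n] := by
    intro n
    induction n with
    | zero => simp [Matrix.one_fin_two]
    | succ n ih =>
      rw [pow_succ, Matrix.SpecialLinearGroup.coe_mul, ih]
      simp [mA, pow_succ]
  obtain ⟨j, h | h⟩ := key s hs
  · refine ⟨j, Or.inl (Subtype.ext ?_)⟩
    rw [hpow, h.1, eq_inv_of_mul_eq_one_left h.2]; rfl
  · refine ⟨j, Or.inr (Subtype.ext ?_)⟩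
    rw [Matrix.SpecialLinearGroup.coe_mul, hpow, h.1, neg_eq_iff_eq_neg.1 (eq_inv_of_mul_eq_one_left h.2)]
    simp [mD]

/-- Bruhat decomposition of `SL₂(11)`, up to the sign `e`. -/
lemma bruhat (M : SL) : ∃ i j k : ℕ, ∃ e : SL, (e = 1 ∨ e = -1) ∧
    (M = mU ^ i * (e * mA ^ j) ∨ M = mU ^ i * (e * mA ^ j) * mT * mU ^ k) := by
  obtain ⟨M, hM⟩ := M
  obtain ⟨α, β, γ, δ, rfl⟩ : ∃ α β γ δ, M = !![α, β; γ, δ] :=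
    ⟨_, _, _, _, Matrix.eta_fin_two M⟩
  rw [Matrix.det_fin_two_of] at hM
  by_cases hγ : γ = 0
  · subst hγ
    have hα : α ≠ 0 := by rintro rfl; simp at hM
    have hδ : δ = α⁻¹ := by field_simp; linear_combination hM
    obtain ⟨j, hj⟩ := mD_eq α hα
    obtain ⟨e, he, hj⟩ : ∃ e : SL, (e = 1 ∨ e = -1) ∧ mD α hα = e * mA ^ j := by
      rcases hj with h | h
      · exact ⟨1, Or.inl rfl, by simpa using h⟩
      · exact ⟨-1, Or.inr rfl, h⟩
    refine ⟨(β * α).val, j, 0, e, he, Or.inl ?_⟩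
    rw [← hj, mU_pow]
    apply Subtype.ext
    rw [Matrix.SpecialLinearGroup.coe_mul]
    simp [mE, mD, hδ, hα]
  · obtain ⟨j, hj⟩ := mD_eq γ⁻¹ (inv_ne_zero hγ)
    obtain ⟨e, he, hj⟩ : ∃ e : SL, (e = 1 ∨ e = -1) ∧ mD γ⁻¹ (inv_ne_zero hγ) = e * mA ^ j := by
      rcases hj with h | h
      · exact ⟨1, Or.inl rfl, by simpa using h⟩
      · exact ⟨-1, Or.inr rfl, h⟩
    refine ⟨(α / γ).val, j, (δ / γ).val, e, he, Or.inr ?_⟩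
    rw [← hj, mU_pow, mU_pow]
    apply Subtype.ext
    have h2 : β = (α * δ - 1) / γ := by field_simp; linear_combination -hM
    simp only [Matrix.SpecialLinearGroup.coe_mul]
    simp [mE, mD, mT, hγ, h2]
    field_simp
    exact ⟨by ring, trivial⟩

lemma mU_pow_eleven : mU ^ 11 = 1 := by rw [mU_pow]; decide +kernel
lemma mA_mul_mU : mA * mU = mU ^ 9 * mA := by rw [mU_pow]; decide +kernel
lemma mT_mul_mT : mT * mT = -1 := by decide +kernel
lemma mA_mT_mA : mA * mT * mA = mT := by decide +kernel
lemma mT_mU_cube :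
    mT * mU * (mT * mU) * (mT * mU) = 1 ∨ mT * mU * (mT * mU) * (mT * mU) = -1 := by
  decide +kernel
lemma mT_mU_ne : mT * mU ≠ mU * mT := by decide +kernel
/-- Images in `H` of the matrices `mU`, `mA`, `mT`, with the relations between them and the Bruhat
decomposition of `H`. -/
lemma exists_images {H : Subgroup P11} (e : H ≃* PSL2_11) :
    ∃ u a t : P11, u ∈ H ∧ a ∈ H ∧ u ≠ 1 ∧ u ^ 11 = 1 ∧ a * u = u ^ 9 * a ∧ t * t = 1 ∧
      a * t * a = t ∧ t * u * (t * u) * (t * u) = 1 ∧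
      ∀ x ∈ H, ∃ i j k : ℕ, x = u ^ i * a ^ j ∨ x = u ^ i * a ^ j * t * u ^ k := by
  let ψ : SL →* P11 := H.subtype.comp (e.symm.toMonoidHom.comp (QuotientGroup.mk' _))
  have hmem : ∀ M, ψ M ∈ H := fun M => (e.symm (QuotientGroup.mk M)).2
  have hsurj : ∀ x ∈ H, ∃ M, ψ M = x := by
    intro x hx
    obtain ⟨M, hM⟩ := QuotientGroup.mk_surjective (e ⟨x, hx⟩)
    refine ⟨M, ?_⟩
    change ((e.symm (QuotientGroup.mk M) : H) : P11) = x
    rw [hM]; simp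
  have hker : ∀ M, ψ M = 1 ↔ M ∈ Subgroup.center SL := by
    intro M
    change ((e.symm (QuotientGroup.mk M) : H) : P11) = 1 ↔ _
    rw [OneMemClass.coe_eq_one, map_eq_one_iff _ e.symm.injective, QuotientGroup.eq_one_iff]
  have hneg : ψ (-1) = 1 := by
    rw [hker, Subgroup.mem_center_iff]
    intro g; simp
  have hpm : ∀ s : SL, (s = 1 ∨ s = -1) → ψ s = 1 := by
    rintro s (rfl | rfl)
    · simp
    · exact hneg
  refine ⟨ψ mU, ψ mA, ψ mT, hmem _, hmem _, ?_, ?_, ?_, ?_, ?_, ?_, ?_⟩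
  · intro h
    rw [hker, Subgroup.mem_center_iff] at h
    exact mT_mU_ne (h mT)
  · rw [← map_pow, mU_pow_eleven, map_one]
  · rw [← map_pow, ← map_mul, ← map_mul, mA_mul_mU]
  · rw [← map_mul, mT_mul_mT, hneg]
  · rw [← map_mul, ← map_mul, mA_mT_mA]
  · simp only [← map_mul]; exact hpm _ mT_mU_cube
  · intro x hx
    obtain ⟨M, rfl⟩ := hsurj x hx
    obtain ⟨i, j, k, s, hs, h | h⟩ := bruhat M
    · exact ⟨i, j, k, Or.inl (by rw [h]; simp [hpm s hs])⟩
    · exact ⟨i, j, k, Or.inr (by rw [h]; simp [hpm s hs])⟩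

lemma exists_conj_cRot {u : P11} (h1 : u ≠ 1) (h11 : u ^ 11 = 1) :
    ∃ g : P11, g * u * g⁻¹ = cRot := by
  have ho : orderOf u = 11 := orderOf_eq_prime h11 h1
  have hc : u.IsCycle := Perm.isCycle_of_prime_order'' (by simpa using Fact.out) (by simpa using ho)
  have : IsConj u cRot := by
    rw [Perm.isConj_iff_cycleType_eq, hc.cycleType, cRot, cycleType_finRotate, ← hc.orderOf, ho]
  exact isConj_iff.1 this

lemma cRot_pow_apply (n : ℕ) (x : Fin 11) : (cRot ^ n) x = x + Fin.ofNat 11 n := by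
  induction n with
  | zero => simp
  | succ n ih =>
    rw [pow_succ', Perm.mul_apply, ih, cRot, finRotate_apply]
    simp [Fin.ext_iff, Fin.val_add]; omega

/-- A permutation `a` with `a c = c⁹ a` is `x ↦ 9 x + b`, and a power of `c` conjugates it to the case
`b = 0`. -/
lemma a_unique {a : P11} (h : a * cRot = cRot ^ 9 * a) :
    ∃ m : ℕ, cRot ^ m * a * (cRot ^ m)⁻¹ = aMul := by
  have h1 : ∀ x, a (x + 1) = a x + 9 := by
    intro x
    have := congrArg (fun p : P11 => p x) h
    simp only [Perm.mul_apply, cRot_pow_apply] at this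
    rw [cRot, finRotate_apply] at this
    exact this
  have h2 : ∀ x, a x = 9 * x + a 0 := by
    intro x
    obtain ⟨n, rfl⟩ : ∃ n : ℕ, x = Fin.ofNat 11 n := ⟨x.val, by simp⟩
    induction n with
    | zero => simp
    | succ n ih =>
      have : (Fin.ofNat 11 (n + 1)) = Fin.ofNat 11 n + 1 := by
        simp [Fin.ext_iff, Fin.val_add]
      rw [this, h1, ih]
      generalize Fin.ofNat 11 n = y
      generalize a 0 = z
      revert y z; decide +kernel
  obtain ⟨m, hm⟩ : ∃ m : Fin 11, ∀ x, 9 * x + a 0 + m = 9 * (x + m) := by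
    generalize a 0 = z
    revert z; decide +kernel
  refine ⟨m.val, ?_⟩
  rw [mul_inv_eq_iff_eq_mul]
  ext1 x
  simp only [Perm.mul_apply, cRot_pow_apply]
  rw [h2]
  have : Fin.ofNat 11 m.val = m := by simp
  rw [this, hm]; rfl

/-- The relation with `aMul` shows that `t` fixes `0` and is determined by its values at `1` and `2`,
representatives of the two nonzero orbits of `aMul`; the other relations leave two pairs of
values. -/
lemma t_unique {t : P11} (h2 : t * t = 1) (ha : aMul * t * aMul = t)
    (h3 : t * cRot * (t * cRot) * (t * cRot) = 1) : t = tInv ∨ t = tInv' := by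
  have e1 : ∀ x, t (t x) = x := fun x => congrArg (fun p : P11 => p x) h2
  have e2 : ∀ x, 9 * t (9 * x) = t x := fun x => congrArg (fun p : P11 => p x) ha
  have e3 : ∀ x, t (t (t (x + 1) + 1) + 1) = x := by
    intro x
    have := congrArg (fun p : P11 => p x) h3
    simp only [Perm.mul_apply, cRot, finRotate_apply] at this
    exact this
  have inv9 : ∀ x y : Fin 11, 9 * x = y → x = 5 * y := by decide +kernel
  have f : ∀ x, t (9 * x) = 5 * t x := fun x => inv9 _ _ (e2 x)
  have t0 : t 0 = 0 := by
    have := f 0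
    revert this
    simp only [mul_zero]
    generalize t 0 = y
    revert y; decide +kernel
  have t9 : t 9 = 5 * t 1 := f 1
  have t4 : t 4 = 5 * (5 * t 1) := by rw [← t9]; exact f 9
  have t3 : t 3 = 5 * (5 * (5 * t 1)) := by rw [← t4]; exact f 4
  have t5 : t 5 = 5 * (5 * (5 * (5 * t 1))) := by rw [← t3]; exact f 3
  have t7 : t 7 = 5 * t 2 := f 2
  have t8 : t 8 = 5 * (5 * t 2) := by rw [← t7]; exact f 7
  have t6 : t 6 = 5 * (5 * (5 * t 2)) := by rw [← t8]; exact f 8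
  have t10 : t 10 = 5 * (5 * (5 * (5 * t 2))) := by rw [← t6]; exact f 6
  have tab : ⇑t = ![0, t 1, t 2, t 3, t 4, t 5, t 6, t 7, t 8, t 9, t 10] := by
    funext x; fin_cases x
    · exact t0
    all_goals rfl
  rw [t9, t4, t3, t5, t7, t8, t6, t10] at tab
  suffices h : ⇑t = ⇑tInv ∨ ⇑t = ⇑tInv' by
    rcases h with h | h
    · exact Or.inl (DFunLike.coe_injective h)
    · exact Or.inr (DFunLike.coe_injective h)
  revert e1 e3
  generalize t 1 = k at tab
  generalize t 2 = m at tab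
  rw [tab]
  clear * -
  revert k m
  decide +kernel

/-- `K` is in normal position: it contains `cRot` and `aMul`, and all its elements have a Bruhat
decomposition in terms of `cRot`, `aMul` and `tInv`. -/
def Good (K : Subgroup P11) : Prop :=
  cRot ∈ K ∧ aMul ∈ K ∧
    ∀ x ∈ K, ∃ i j k : ℕ, x = cRot ^ i * aMul ^ j ∨ x = cRot ^ i * aMul ^ j * tInv * cRot ^ k

lemma conj_mem_map {H : Subgroup P11} (g : P11) {h : P11} (hh : h ∈ H) :
    g * h * g⁻¹ ∈ H.map (MulAut.conj g).toMonoidHom := ⟨h, hh, rfl⟩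

lemma aMul_mul_cRot : aMul * cRot = cRot ^ 9 * aMul := by decide +kernel
lemma negP_cRot : negP * cRot * negP⁻¹ = cRot ^ 10 := by decide +kernel
lemma cRot_ten : (cRot ^ 10) ^ 10 = cRot := by decide +kernel
lemma negP_aMul : negP * aMul * negP⁻¹ = aMul := by decide +kernel
lemma negP_tInv' : negP * tInv' * negP⁻¹ = tInv := by decide +kernel

lemma exists_good {H : Subgroup P11} (e : H ≃* PSL2_11) :
    ∃ g : P11, Good (H.map (MulAut.conj g).toMonoidHom) := by
  obtain ⟨u, a, t, hu, ha, hu1, hu11, hau, ht, hat, htu, hform⟩ := exists_images e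
  obtain ⟨g₁, hg₁⟩ := exists_conj_cRot hu1 hu11
  have ha₁ : (g₁ * a * g₁⁻¹) * cRot = cRot ^ 9 * (g₁ * a * g₁⁻¹) := by
    rw [← hg₁, conj_pow]
    have := congrArg (fun p => g₁ * p * g₁⁻¹) hau
    simpa [mul_assoc] using this
  obtain ⟨m, hm⟩ := a_unique ha₁
  set g := cRot ^ m * g₁ with hg
  have hgu : MulAut.conj g u = cRot := by
    have : cRot ^ m * cRot * (cRot ^ m)⁻¹ = cRot := by
      rw [← pow_succ, pow_succ', mul_inv_cancel_right]
    rw [← hg₁] at this ⊢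
    rw [MulAut.conj_apply, hg, ← this]
    simp [mul_assoc, ← hg₁]
  have hga : MulAut.conj g a = aMul := by
    rw [← hm, MulAut.conj_apply, hg]; simp [mul_assoc]
  have hgt : MulAut.conj g t = tInv ∨ MulAut.conj g t = tInv' := by
    apply t_unique
    · rw [← map_mul, ht, map_one]
    · rw [← hga, ← map_mul, ← map_mul, hat]
    · rw [← hgu]; simp only [← map_mul]; rw [htu, map_one]
  rcases hgt with hgt | hgt
  · refine ⟨g, ?_, ?_, ?_⟩
    · rw [← hgu]; exact conj_mem_map g hu
    · rw [← hga]; exact conj_mem_map g ha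
    · rintro _ ⟨x, hx, rfl⟩
      obtain ⟨i, j, k, h⟩ := hform x hx
      refine ⟨i, j, k, ?_⟩
      rw [← hgu, ← hga, ← hgt]
      simp only [← map_mul, ← map_pow]
      exact h.imp (congrArg _) (congrArg _)
  -- Conjugation by `negP` inverts `cRot`; replacing `cRot` by `cRot ^ 10` keeps the Bruhat form.
  · have ku : MulAut.conj (negP * g) u = cRot ^ 10 := by
      rw [map_mul, MulAut.mul_apply, hgu, MulAut.conj_apply, negP_cRot]
    have ka : MulAut.conj (negP * g) a = aMul := by
      rw [map_mul, MulAut.mul_apply, hga, MulAut.conj_apply, negP_aMul]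
    have kt : MulAut.conj (negP * g) t = tInv := by
      rw [map_mul, MulAut.mul_apply, hgt, MulAut.conj_apply, negP_tInv']
    refine ⟨negP * g, ?_, ?_, ?_⟩
    · rw [← cRot_ten, ← ku]; exact pow_mem (conj_mem_map _ hu) _
    · rw [← ka]; exact conj_mem_map _ ha
    · rintro _ ⟨x, hx, rfl⟩
      obtain ⟨i, j, k, h⟩ := hform x hx
      refine ⟨10 * i, j, 10 * k, ?_⟩
      rw [pow_mul, pow_mul, ← ku, ← ka, ← kt]
      simp only [← map_mul, ← map_pow]
      exact h.imp (congrArg _) (congrArg _)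

/-- The 55 involutions `cⁱ (aʲ t) c⁻ⁱ` of a subgroup in normal position. -/
def invol (i : Fin 11) (j : Fin 5) : P11 :=
  cRot ^ (i : ℕ) * (aMul ^ (j : ℕ) * tInv) * (cRot ^ (i : ℕ))⁻¹

lemma cRot_pow_mod (n : ℕ) : cRot ^ n = cRot ^ (n % 11) := by
  rw [← pow_mod_orderOf]; congr; exact orderOf_eq_prime (by decide +kernel) (by decide +kernel)

lemma aMul_pow_mod (n : ℕ) : aMul ^ n = aMul ^ (n % 5) := by
  conv_lhs => rw [← Nat.div_add_mod n 5, pow_add, pow_mul]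
  rw [show aMul ^ 5 = 1 by decide +kernel, one_pow, one_mul]

lemma borel_no_inv : ∀ (i : Fin 11) (j : Fin 5),
    cRot ^ (i : ℕ) * aMul ^ (j : ℕ) * (cRot ^ (i : ℕ) * aMul ^ (j : ℕ)) = 1 →
    cRot ^ (i : ℕ) * aMul ^ (j : ℕ) = 1 := by decide +kernel

lemma bigcell_inv : ∀ (s : Fin 11) (j : Fin 5),
    aMul ^ (j : ℕ) * tInv * cRot ^ (s : ℕ) * (aMul ^ (j : ℕ) * tInv * cRot ^ (s : ℕ)) = 1 →
    s = 0 := by decide +kernel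

/-- The Borel subgroup has odd order 55. An involution `cⁱ aʲ t cᵏ` of the big cell is conjugate to
`aʲ t cᵏ⁺ⁱ`, which is an involution only if `k + i = 0`. -/
lemma Good.exists_invol {K : Subgroup P11} (hK : Good K) {x : P11} (hx : x ∈ K)
    (hi : IsInvolution x) : ∃ i j, x = invol i j := by
  obtain ⟨i, j, k, h | h⟩ := hK.2.2 x hx
  · rw [cRot_pow_mod, aMul_pow_mod] at h
    have := borel_no_inv ⟨i % 11, Nat.mod_lt _ (by norm_num)⟩ ⟨j % 5, Nat.mod_lt _ (by norm_num)⟩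
    rw [← h] at this
    exact absurd (this hi.2) hi.1
  · have h1 := hi.2
    have hy : x = cRot ^ i * (aMul ^ j * tInv * cRot ^ (k + i)) * (cRot ^ i)⁻¹ := by
      rw [h, pow_add]; group
    rw [hy] at h1
    have h2 : aMul ^ j * tInv * cRot ^ (k + i) * (aMul ^ j * tInv * cRot ^ (k + i)) = 1 := by
      rw [← conj_eq_one_iff (a := cRot ^ i), ← h1]; group
    rw [cRot_pow_mod (k + i), aMul_pow_mod j] at h2
    have h3 := bigcell_inv ⟨(k + i) % 11, Nat.mod_lt _ (by norm_num)⟩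
      ⟨j % 5, Nat.mod_lt _ (by norm_num)⟩ h2
    have h4 : (k + i) % 11 = 0 := congrArg Fin.val h3
    refine ⟨⟨i % 11, Nat.mod_lt _ (by norm_num)⟩, ⟨j % 5, Nat.mod_lt _ (by norm_num)⟩, ?_⟩
    rw [hy, cRot_pow_mod (k + i), h4, cRot_pow_mod i, aMul_pow_mod j]; simp [invol]

/-- The exponent `3 j` is half of `j` modulo 5, since `t` inverts `a`. -/
lemma invol_conj : ∀ (i : Fin 11) (j : Fin 5),
    (cRot ^ (i : ℕ) * aMul ^ (3 * j : ℕ))⁻¹ * invol i j * (cRot ^ (i : ℕ) * aMul ^ (3 * j : ℕ)) = tInv := by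
  decide +kernel

lemma map_conj_eq_self {K : Subgroup P11} {h : P11} (hh : h ∈ K) :
    K.map (MulAut.conj h).toMonoidHom = K := by
  exact Subgroup.conj_smul_eq_self_of_mem hh

/-- A subgroup isomorphic to `PSL₂(11)` can be brought to normal position so that a given involution
of it becomes `tInv`. -/
lemma exists_good_conj {H : Subgroup P11} (e : H ≃* PSL2_11) {y : P11} (hy : y ∈ H)
    (hi : IsInvolution y) :
    ∃ g : P11, Good (H.map (MulAut.conj g).toMonoidHom) ∧ MulAut.conj g y = tInv := by
  obtain ⟨g, hg⟩ := exists_good e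
  have hi' : IsInvolution (MulAut.conj g y) :=
    ⟨fun h => hi.1 (by simpa using h), by rw [← map_mul, hi.2, map_one]⟩
  obtain ⟨i, j, hij⟩ := hg.exists_invol (conj_mem_map g hy) hi'
  set h := (cRot ^ (i : ℕ) * aMul ^ (3 * j : ℕ))⁻¹ with hh
  have hmem : h ∈ H.map (MulAut.conj g).toMonoidHom :=
    inv_mem (mul_mem (pow_mem hg.1 _) (pow_mem hg.2.1 _))
  refine ⟨h * g, ?_, ?_⟩
  · have : H.map (MulAut.conj (h * g)).toMonoidHom = H.map (MulAut.conj g).toMonoidHom := by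
      rw [← map_conj_eq_self hmem, Subgroup.map_map, map_mul]; rfl
    rw [this]; exact hg
  · rw [map_mul, MulAut.mul_apply, MulAut.conj_apply g y, hij, ← invol_conj i j, MulAut.conj_apply, hh]
    simp

/-! ### Inspection of the involutions -/

/-- The points. -/
abbrev Pt := Fin 11

/-- The function underlying `invol i j`, in a form that evaluates quickly. -/
def invF (i : Fin 11) (j : Fin 5) (v : Pt) : Pt := i + 9 ^ (j : ℕ) * tInv (v - i)

lemma invol_apply : ∀ i j v, invol i j v = invF i j v := by decide +kernel

/-- Boolean test for `f ∘ g = g ∘ f`. -/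
def commB (f g : Pt → Pt) : Bool := (List.finRange 11).all fun v => f (g v) == g (f v)

lemma commB_iff (p q : P11) : commB p q = true ↔ p * q = q * p := by
  simp [commB, Equiv.ext_iff]

/-- Boolean test for `(f ∘ g)³ = id`. -/
def cubeB (f g : Pt → Pt) : Bool := (List.finRange 11).all fun v => f (g (f (g (f (g v))))) == v

lemma cubeB_iff (p q : P11) : cubeB p q = true ↔ (p * q) ^ 3 = 1 := by
  simp [cubeB, Equiv.ext_iff, pow_succ]

lemma no_central : ∀ i j, commB (invF i j) cRot = false := by decide +kernel

lemma dihedral_centralizer : ∀ i j, commB (invF i j) tInv = false →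
    ∀ i₁ j₁, commB (invF i₁ j₁) tInv = true → commB (invF i₁ j₁) (invF i j) = true →
    ∀ i₂ j₂, commB (invF i₂ j₂) tInv = true → commB (invF i₂ j₂) (invF i j) = true →
      i₁ = i₂ ∧ j₁ = j₂ := by decide +kernel

/-- Adjoins to `S` its images under `x`, `y`, `w`. -/
def orbStep (x y w : Pt → Pt) (S : Finset Pt) : Finset Pt :=
  S ∪ S.image x ∪ S.image y ∪ S.image w

/-- `n` iterations of `orbStep`. -/
def orb (x y w : Pt → Pt) : ℕ → Finset Pt → Finset Pt
  | 0, S => S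
  | n + 1, S => orb x y w n (orbStep x y w S)

/-- Some point `v` lies in a proper subset of the points stable under `x`, `y`, `w`. Six iterations of
`orbStep` give such a subset in every case of `order_three`. -/
def intransB (x y w : Pt → Pt) : Bool :=
  (List.finRange 11).any fun v =>
    let S := orb x y w 6 {v}
    decide (orbStep x y w S = S) && decide (S ≠ Finset.univ) && decide (v ∈ S)

/-- Here `⟨x, y, w⟩`, with `y = tInv`, has order 12 or 60. -/
lemma order_three : ∀ i j, cubeB (invF i j) tInv = true → commB (invF i j) tInv = false →
    ∀ i₁ j₁, commB (invF i j) (invF i₁ j₁) = true → ¬ (i = i₁ ∧ j = j₁) →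
    cubeB (invF i₁ j₁) tInv = false ∧ intransB (invF i j) tInv (invF i₁ j₁) = true := by
  decide +kernel

/-! ### Search for the involutions commuting with two given permutations

A partial description of an unknown involution `z` commuting with `x` and `y` is a list of pairs
`(p, z p)`. Choosing a value of `z` at a new point determines `z` on the orbit of that point under
`⟨x, y⟩`, and most choices are contradictory at once. -/

/-- `force v k` equals `k v`; the case distinction makes the kernel evaluate `v` before it is
substituted in `k`. -/
def force {α : Type} (v : Pt) (k : Pt → α) : α :=
  if v = 0 then k 0 else if v = 1 then k 1 else if v = 2 then k 2 else if v = 3 then k 3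
  else if v = 4 then k 4 else if v = 5 then k 5 else if v = 6 then k 6 else if v = 7 then k 7
  else if v = 8 then k 8 else if v = 9 then k 9 else k v

lemma force_eq {α : Type} (v : Pt) (k : Pt → α) : force v k = k v := by
  unfold force; split_ifs <;> simp_all

/-- Adds the pair `(p, v)` to the partial description `L`; `none` if `L` has another value at `p`. -/
def ins (p v : Pt) (L : List (Pt × Pt)) : Option (List (Pt × Pt)) :=
  match L.lookup p with
  | some w => if w = v then some L else none
  | none => some ((p, v) :: L)

/-- Adds the consequences of `z p = v`, along `n` steps of the orbit of `p` under `⟨x ∘ y⟩`, using that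
`z` is an involution commuting with `x` and `y`; `none` if they are contradictory. -/
def extend (x y : Pt → Pt) : ℕ → Pt → Pt → List (Pt × Pt) → Option (List (Pt × Pt))
  | 0, _, _, L => some L
  | n + 1, p, v, L =>
    match ins p v L with
    | none => none
    | some L₁ =>
      match ins v p L₁ with
      | none => none
      | some L₂ =>
        force (y p) fun p' => force (y v) fun v' =>
          match ins p' v' L₂ with
          | none => none
          | some L₃ => force (x p') fun p'' => force (x v') fun v'' => extend x y n p'' v'' L₃

/-- The description `L` is complete, and forces `z = 1`, or `z = (x y)³`, or that `z`, being a product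
of half as many transpositions as it moves points, is odd. -/
def finalB (x y : Pt → Pt) (L : List (Pt × Pt)) : Bool :=
  ((List.finRange 11).all fun p => L.lookup p == some p) ||
  ((List.finRange 11).all fun p => L.lookup p == some (x (y (x (y (x (y p))))))) ||
  (((List.finRange 11).all fun p => (L.lookup p).isSome) &&
    (11 - (List.finRange 11).countP fun p => L.lookup p == some p) / 2 % 2 == 1)

/-- Every completion of the partial description `L` found by choosing values at the points `ps`, as
long as they are not determined, passes the test `finalB`. -/
def search (x y : Pt → Pt) : List Pt → List (Pt × Pt) → Bool
  | [], L => finalB x y L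
  | p :: ps, L =>
    if (L.lookup p).isSome then search x y ps L
    else (List.finRange 11).all fun v =>
      match extend x y 6 p v L with
      | none => true
      | some L' => search x y ps L'

/-- The products `x y`, with `y = tInv`, considered here have cycle type `5²·1` or `6·3·2`. -/
lemma search_true : ∀ i j, cubeB (invF i j) tInv = false → commB (invF i j) tInv = false →
    search (invF i j) tInv (List.finRange 11) [] = true := by
  decide +kernel

lemma coe_invol (i : Fin 11) (j : Fin 5) : ⇑(invol i j) = invF i j := funext (invol_apply i j)

/-- The pairs of `L` are correct values of `z`. -/
def Agrees (z : P11) (L : List (Pt × Pt)) : Prop := ∀ a ∈ L, z a.1 = a.2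

lemma Agrees.lookup {z : P11} {L : List (Pt × Pt)} (h : Agrees z L) {p v : Pt}
    (hp : L.lookup p = some v) : z p = v := by
  induction L with
  | nil => simp at hp
  | cons a L ih =>
    rw [List.lookup_cons] at hp
    split at hp
    · rename_i hpa
      have : p = a.1 := by simpa using hpa
      rw [this, h a (by simp)]; simpa using hp
    · exact ih (fun b hb => h b (by simp [hb])) hp

lemma Agrees.ins {z : P11} {L : List (Pt × Pt)} (h : Agrees z L) {p v : Pt} (hp : z p = v) :
    ∃ L', ins p v L = some L' ∧ Agrees z L' := by
  unfold _root_.ins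
  split
  · rename_i w hw
    rw [if_pos ((h.lookup hw).symm.trans hp)]
    exact ⟨L, rfl, h⟩
  · refine ⟨_, rfl, ?_⟩
    intro a ha
    rcases List.mem_cons.1 ha with rfl | ha
    · exact hp
    · exact h a ha

section search
variable {x y z : P11}

lemma Agrees.extend (hx : ∀ p, z (x p) = x (z p)) (hy : ∀ p, z (y p) = y (z p))
    (hz : ∀ p, z (z p) = p) (n : ℕ) {L : List (Pt × Pt)} (h : Agrees z L) {p v : Pt}
    (hp : z p = v) : ∃ L', extend x y n p v L = some L' ∧ Agrees z L' := by
  induction n generalizing p v L with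
  | zero => exact ⟨L, rfl, h⟩
  | succ n ih =>
    obtain ⟨L₁, e₁, h₁⟩ := h.ins hp
    obtain ⟨L₂, e₂, h₂⟩ := h₁.ins (p := v) (v := p) (by rw [← hp, hz])
    obtain ⟨L₃, e₃, h₃⟩ := h₂.ins (p := y p) (v := y v) (by rw [hy, hp])
    simp only [_root_.extend, force_eq, e₁, e₂, e₃]
    exact ih h₃ (by rw [hx, hy, hp])

lemma search_sound (hx : ∀ p, z (x p) = x (z p)) (hy : ∀ p, z (y p) = y (z p))
    (hz : ∀ p, z (z p) = p) (ps : List Pt) {L : List (Pt × Pt)} (h : Agrees z L)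
    (hs : search x y ps L = true) : ∃ L', Agrees z L' ∧ finalB x y L' = true := by
  induction ps generalizing L with
  | nil => exact ⟨L, h, hs⟩
  | cons p ps ih =>
    rw [search] at hs
    split at hs
    · exact ih h hs
    · have h1 := List.all_eq_true.1 hs (z p) (List.mem_finRange _)
      obtain ⟨L', e', h'⟩ := h.extend hx hy hz 6 (p := p) rfl
      rw [e'] at h1
      exact ih h' h1

lemma finalB_sound {L : List (Pt × Pt)} (h : Agrees z L) (hL : finalB x y L = true)
    (hz : z * z = 1) (hs : Perm.sign z = 1) : z = 1 ∨ z = (x * y) ^ 3 := by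
  simp only [finalB, Bool.or_eq_true, Bool.and_eq_true, List.all_eq_true, beq_iff_eq] at hL
  rcases hL with (h1 | h1) | ⟨h1, h2⟩
  · exact Or.inl (Equiv.ext fun p => h.lookup (h1 p (List.mem_finRange _)))
  · refine Or.inr (Equiv.ext fun p => ?_)
    rw [h.lookup (h1 p (List.mem_finRange _))]
    simp [pow_succ]
  · exfalso
    have h3 : ∀ p, (L.lookup p == some p) = decide (p ∈ Function.fixedPoints z) := by
      intro p
      obtain ⟨v, hv⟩ := Option.isSome_iff_exists.1 (h1 p (List.mem_finRange _))
      rw [hv, Bool.eq_iff_iff]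
      simp [Function.mem_fixedPoints, Function.IsFixedPt, h.lookup hv]
    have h4 : (List.finRange 11).countP (fun p => L.lookup p == some p) =
        Fintype.card (Function.fixedPoints z) := by
      simp only [h3]
      rw [Fintype.card_subtype, List.countP_eq_length_filter]
      rfl
    rw [Perm.sign_of_pow_two_eq_one (by rw [pow_two, hz]), ← h4, Fintype.card_fin,
      Odd.neg_one_pow (Nat.odd_iff.2 h2)] at hs
    exact absurd hs (by decide)
end search

lemma pair_centralizer {i : Fin 11} {j : Fin 5} {z : P11}
    (hc : (invol i j * tInv) ^ 3 ≠ 1) (hn : invol i j * tInv ≠ tInv * invol i j)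
    (hx : z * invol i j = invol i j * z) (hy : z * tInv = tInv * z) (hz : IsInvolution z)
    (hs : Perm.sign z = 1) : z = (invol i j * tInv) ^ 3 := by
  have h := search_true i j
  rw [← coe_invol, ← Bool.not_eq_true, ← Bool.not_eq_true, cubeB_iff, commB_iff] at h
  obtain ⟨L, hL, hf⟩ := search_sound (z := z) (fun p => congrArg (fun q : P11 => q p) hx)
    (fun p => congrArg (fun q : P11 => q p) hy) (fun p => congrArg (fun q : P11 => q p) hz.2)
    _ (L := []) (by simp [Agrees]) (h hc hn)
  exact (finalB_sound hL hf hz.2 hs).resolve_left hz.1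

/-! ### Properties of subgroups isomorphic to `PSL₂(11)` -/

section conj
variable {H : Subgroup P11}

lemma IsInvolution.conj {x : P11} (hx : IsInvolution x) (g : P11) :
    IsInvolution (MulAut.conj g x) :=
  ⟨fun h => hx.1 (by simpa using h), by rw [← map_mul, hx.2, map_one]⟩

lemma map_comm {G G' : Type*} [Group G] [Group G'] (f : G ≃* G') {x y : G} :
    f x * f y = f y * f x ↔ x * y = y * x := by
  rw [← map_mul, ← map_mul, f.injective.eq_iff]

lemma map_cube {G G' : Type*} [Group G] [Group G'] (f : G ≃* G') {x y : G} :
    (f x * f y) ^ 3 = 1 ↔ (x * y) ^ 3 = 1 := by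
  rw [← map_mul, ← map_pow, map_eq_one_iff _ f.injective]

lemma not_central (e : H ≃* PSL2_11) {x : P11} (hx : x ∈ H) (hi : IsInvolution x)
    (hc : ∀ h ∈ H, x * h = h * x) : False := by
  obtain ⟨g, hg⟩ := exists_good e
  obtain ⟨i, j, hij⟩ := hg.exists_invol (conj_mem_map g hx) (hi.conj g)
  obtain ⟨u, hu, hu'⟩ := hg.1
  have h1 := no_central i j
  rw [← coe_invol, ← Bool.not_eq_true, commB_iff, ← hij] at h1
  apply h1
  rw [← hu']
  exact (map_comm (MulAut.conj g)).2 (hc u hu)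

/-- At most one involution of `H` commutes with two given noncommuting involutions of `H`. -/
lemma common_centralizer (e : H ≃* PSL2_11) {x y z w : P11} (hx : x ∈ H) (hy : y ∈ H)
    (hz : z ∈ H) (hw : w ∈ H) (ix : IsInvolution x) (iy : IsInvolution y) (iz : IsInvolution z)
    (iw : IsInvolution w) (hxy : x * y ≠ y * x) (hzx : z * x = x * z) (hzy : z * y = y * z)
    (hwx : w * x = x * w) (hwy : w * y = y * w) : z = w := by
  obtain ⟨g, hg, hgy⟩ := exists_good_conj e hy iy
  obtain ⟨i, j, hij⟩ := hg.exists_invol (conj_mem_map g hx) (ix.conj g)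
  obtain ⟨i₁, j₁, hij₁⟩ := hg.exists_invol (conj_mem_map g hz) (iz.conj g)
  obtain ⟨i₂, j₂, hij₂⟩ := hg.exists_invol (conj_mem_map g hw) (iw.conj g)
  rw [← MulAut.conj_apply] at hij hij₁ hij₂
  have h := dihedral_centralizer i j
  simp only [← coe_invol, ← Bool.not_eq_true, commB_iff] at h
  rw [← hij, ← hgy] at h
  have h2 := h (fun h => hxy ((map_comm _).1 h)) i₁ j₁ (by rw [← hij₁]; exact (map_comm _).2 hzy)
    (by rw [← hij₁]; exact (map_comm _).2 hzx) i₂ j₂ (by rw [← hij₂]; exact (map_comm _).2 hwy)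
    (by rw [← hij₂]; exact (map_comm _).2 hwx)
  apply (MulAut.conj g).injective
  rw [hij₁, hij₂, h2.1, h2.2]

/-- If `(x y)³ ≠ 1`, the only even involution that can commute with `x` and `y` is `(x y)³`, which is
in `H`. -/
lemma cube_of_pair (e : H ≃* PSL2_11) {x y z : P11} (hx : x ∈ H) (hy : y ∈ H)
    (ix : IsInvolution x) (iy : IsInvolution y) (iz : IsInvolution z) (hs : Perm.sign z = 1)
    (hzH : z ∉ H) (hxy : x * y ≠ y * x) (hzx : z * x = x * z) (hzy : z * y = y * z) :
    (x * y) ^ 3 = 1 := by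
  by_contra hc
  obtain ⟨g, hg, hgy⟩ := exists_good_conj e hy iy
  obtain ⟨i, j, hij⟩ := hg.exists_invol (conj_mem_map g hx) (ix.conj g)
  rw [← MulAut.conj_apply] at hij
  have h := pair_centralizer (i := i) (j := j) (z := MulAut.conj g z)
  rw [← hij, ← hgy] at h
  have h1 := h (mt (map_cube _).1 hc) (mt (map_comm _).1 hxy) ((map_comm _).2 hzx)
    ((map_comm _).2 hzy) (iz.conj g) (by simp [hs, mul_comm])
  rw [← map_mul, ← map_pow, (MulAut.conj g).injective.eq_iff] at h1
  exact hzH (h1 ▸ pow_mem (mul_mem hx hy) 3)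

open scoped Pointwise in
/-- The 11-cycle `cRot` is transitive, so it cannot stabilise the set found by `intransB`. -/
lemma intransB_sound {x y w : P11} (h : intransB x y w = true) :
    cRot ∉ Subgroup.closure {x, y, w} := by
  intro hc
  simp only [intransB, List.any_eq_true, Bool.and_eq_true, decide_eq_true_eq] at h
  obtain ⟨v, -, ⟨h1, h2⟩, h3⟩ := h
  generalize orb x y w 6 {v} = S at h1 h2 h3
  -- A finite set mapped into itself by a permutation is mapped onto itself.
  have key : ∀ q : P11, S.image q ⊆ S → q ∈ MulAction.stabilizer P11 S := by
    intro q hq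
    rw [MulAction.mem_stabilizer_iff]
    exact Finset.eq_of_subset_of_card_le hq (by rw [Finset.card_smul_finset])
  have hle : Subgroup.closure {x, y, w} ≤ MulAction.stabilizer P11 S := by
    rw [Subgroup.closure_le]
    rw [orbStep] at h1
    rintro q (rfl | rfl | rfl) <;> refine key _ ?_ <;> conv_rhs => rw [← h1]
    all_goals grind
  have hr := hle hc
  have hall : ∀ n : ℕ, v + Fin.ofNat 11 n ∈ S := by
    intro n
    rw [← cRot_pow_apply]
    have := MulAction.mem_stabilizer_iff.1 (pow_mem hr n)
    rw [← this]
    exact Finset.smul_mem_smul_finset h3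
  apply h2
  rw [Finset.eq_univ_iff_forall]
  intro p
  have := hall (p - v).val
  simpa using this

lemma triple (e : H ≃* PSL2_11) {x y w : P11} (hx : x ∈ H) (hy : y ∈ H) (hw : w ∈ H)
    (ix : IsInvolution x) (iy : IsInvolution y) (iw : IsInvolution w)
    (hxy : x * y ≠ y * x) (hxw : x * w = w * x) (hne : x ≠ w) (hc : (x * y) ^ 3 = 1) :
    (w * y) ^ 3 ≠ 1 ∧ ¬ H ≤ Subgroup.closure {x, y, w} := by
  obtain ⟨g, hg, hgy⟩ := exists_good_conj e hy iy
  obtain ⟨i, j, hij⟩ := hg.exists_invol (conj_mem_map g hx) (ix.conj g)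
  obtain ⟨i₁, j₁, hij₁⟩ := hg.exists_invol (conj_mem_map g hw) (iw.conj g)
  rw [← MulAut.conj_apply] at hij hij₁
  have h := order_three i j
  simp only [← coe_invol, ← Bool.not_eq_true (commB _ _), ← Bool.not_eq_true (cubeB _ _),
    commB_iff, cubeB_iff] at h
  rw [← hij, ← hgy, map_cube, map_comm] at h
  have h1 := h hc hxy i₁ j₁
  rw [← hij₁, map_comm, map_cube] at h1
  obtain ⟨h2, h3⟩ := h1 hxw (by
    rintro ⟨rfl, rfl⟩; exact hne ((MulAut.conj g).injective (hij.trans hij₁.symm)))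
  refine ⟨h2, fun hle => intransB_sound h3 ?_⟩
  have := Subgroup.map_mono (f := (MulAut.conj g).toMonoidHom) hle hg.1
  rw [MonoidHom.map_closure] at this
  simpa [Set.image_insert_eq] using this

lemma comm_of_closure {s : Set P11} {x : P11} (hle : H ≤ Subgroup.closure s)
    (h : ∀ q ∈ s, x * q = q * x) : ∀ q ∈ H, x * q = q * x := by
  intro q hq
  have : Subgroup.closure s ≤ Subgroup.centralizer {x} := by
    rw [Subgroup.closure_le]
    intro p hp
    rw [SetLike.mem_coe, Subgroup.mem_centralizer_singleton_iff]
    exact (h p hp).symm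
  exact (Subgroup.mem_centralizer_singleton_iff.1 (this (hle hq))).symm

/-- Rank 4, with `z` at the end of the diagram `x - y - w - z`. -/
lemma rank_four_end (e : H ≃* PSL2_11) {x y w z : P11} (hx : x ∈ H) (hy : y ∈ H) (hw : w ∈ H)
    (ix : IsInvolution x) (iy : IsInvolution y) (iw : IsInvolution w) (iz : IsInvolution z)
    (hs : Perm.sign z = 1) (hzH : z ∉ H) (hle : H ≤ Subgroup.closure {x, y, w})
    (hxw : x * w = w * x) (hne : x ≠ w) (hzx : z * x = x * z) (hzy : z * y = y * z) : False := by
  by_cases hxy : x * y = y * x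
  · exact not_central e hx ix (comm_of_closure hle (by rintro q (rfl | rfl | rfl) <;> simp [*]))
  · exact (triple e hx hy hw ix iy iw hxy hxw hne
      (cube_of_pair e hx hy ix iy iz hs hzH hxy hzx hzy)).2 hle

/-- Rank 5, with `z` at the end of the diagram `x - y - w - v - z`. -/
lemma rank_five_end (e : H ≃* PSL2_11) {x y w v z : P11} (hx : x ∈ H) (hy : y ∈ H) (hw : w ∈ H)
    (hv : v ∈ H) (ix : IsInvolution x) (iy : IsInvolution y) (iw : IsInvolution w)
    (iv : IsInvolution v) (iz : IsInvolution z) (hs : Perm.sign z = 1) (hzH : z ∉ H)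
    (hle : H ≤ Subgroup.closure {x, y, w, v}) (hxw : x * w = w * x) (hxv : x * v = v * x)
    (hyv : y * v = v * y) (hne : x ≠ w) (hne' : w ≠ v) (hzx : z * x = x * z)
    (hzy : z * y = y * z) (hzw : z * w = w * z) : False := by
  by_cases hxy : x * y = y * x
  · exact not_central e hx ix
      (comm_of_closure hle (by rintro q (rfl | rfl | rfl | rfl) <;> simp [*]))
  by_cases hwy : w * y = y * w
  · exact hne' (common_centralizer e hx hy hw hv ix iy iw iv hxy hxw.symm hwy hxv.symm hyv.symm)
  · exact (triple e hx hy hw ix iy iw hxy hxw hne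
      (cube_of_pair e hx hy ix iy iz hs hzH hxy hzx hzy)).1
      (cube_of_pair e hw hy iw iy iz hs hzH hwy hzw hzy)

/-- Rank 5, with the middle generator removed from the diagram. -/
lemma rank_five_mid (e : H ≃* PSL2_11) {x y z w : P11} (hx : x ∈ H) (hy : y ∈ H) (hz : z ∈ H)
    (hw : w ∈ H) (ix : IsInvolution x) (iy : IsInvolution y) (iz : IsInvolution z)
    (iw : IsInvolution w) (hle : H ≤ Subgroup.closure {x, y, z, w}) (hne : z ≠ w)
    (hxz : x * z = z * x) (hxw : x * w = w * x) (hyz : y * z = z * y) (hyw : y * w = w * y) :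
    False := by
  by_cases hxy : x * y = y * x
  · exact not_central e hx ix
      (comm_of_closure hle (by rintro q (rfl | rfl | rfl | rfl) <;> simp [*]))
  · exact hne (common_centralizer e hx hy hz hw ix iy iz iw hxy hxz.symm hyz.symm hxw.symm hyw.symm)
end conj

/-! ### String C-groups -/

section sggi
variable {r : ℕ} {ρ : Fin r → P11}

lemma Sggi.comm (h : Sggi ρ) {i j : Fin r} (hij : (i : ℕ) + 1 < j ∨ (j : ℕ) + 1 < i) :
    ρ i * ρ j = ρ j * ρ i := by
  have hi := eq_inv_of_mul_eq_one_left (h.1 i).2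
  have hj := eq_inv_of_mul_eq_one_left (h.1 j).2
  have := eq_inv_of_mul_eq_one_left (h.2 i j hij)
  rw [mul_inv_rev, ← hi, ← hj] at this
  exact this

lemma mem_Gi {i j : Fin r} (hij : j ≠ i) : ρ j ∈ Gi ρ i :=
  Subgroup.subset_closure ⟨j, hij, rfl⟩

lemma notMem_Gi (h : Sggi ρ) (hip : IntersectionProperty ρ) (i : Fin r) : ρ i ∉ Gi ρ i := by
  intro hi
  have h1 := hip {i} {j | j ≠ i}
  have h2 : ({i} : Set (Fin r)) ∩ {j | j ≠ i} = ∅ := by ext j; simp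
  rw [h2, Set.image_empty, Subgroup.closure_empty] at h1
  have h3 : ρ i ∈ (⊥ : Subgroup P11) := by
    rw [← h1]; exact ⟨Subgroup.subset_closure ⟨i, rfl, rfl⟩, hi⟩
  exact (h.1 i).1 (Subgroup.mem_bot.1 h3)

lemma ne_of_ne (h : Sggi ρ) (hip : IntersectionProperty ρ) {i j : Fin r} (hij : i ≠ j) :
    ρ i ≠ ρ j := fun he => notMem_Gi h hip i (he ▸ mem_Gi hij.symm)
end sggi

lemma rank_four (ρ : Fin 4 → P11) (hs : Sggi ρ) (hip : IntersectionProperty ρ)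
    (heven : ∀ i, Perm.sign (ρ i) = 1) (i : Fin 4) (e : Gi ρ i ≃* PSL2_11) : False := by
  have hle : ∀ s : Set P11, (∀ j, j ≠ i → ρ j ∈ s) → Gi ρ i ≤ Subgroup.closure s := by
    intro s h
    apply Subgroup.closure_mono
    rintro _ ⟨j, hj, rfl⟩
    exact h j hj
  have hc : ∀ a b : Fin 4, ((a : ℕ) + 1 < b ∨ (b : ℕ) + 1 < a) → ρ a * ρ b = ρ b * ρ a :=
    fun a b h => hs.comm h
  have hcc := fun (x : P11) (hx : x ∈ Gi ρ i) (ix : IsInvolution x)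
    (h : ∀ j, j ≠ i → x * ρ j = ρ j * x) => not_central e hx ix (comm_of_closure le_rfl (by
      rintro _ ⟨j, hj, rfl⟩; exact h j hj))
  fin_cases i
  · exact rank_four_end e (x := ρ 3) (y := ρ 2) (w := ρ 1) (z := ρ 0)
      (mem_Gi (by decide)) (mem_Gi (by decide)) (mem_Gi (by decide)) (hs.1 _) (hs.1 _) (hs.1 _)
      (hs.1 _) (heven _) (notMem_Gi hs hip _) (hle _ (by intro j hj; fin_cases j <;> simp_all))
      (hc _ _ (by decide)) (ne_of_ne hs hip (by decide)) (hc _ _ (by decide)) (hc _ _ (by decide))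
  · refine hcc (ρ 0) (mem_Gi (by decide)) (hs.1 _) fun j hj => ?_
    fin_cases j
    exacts [rfl, absurd rfl hj, hc _ _ (by decide), hc _ _ (by decide)]
  · refine hcc (ρ 3) (mem_Gi (by decide)) (hs.1 _) fun j hj => ?_
    fin_cases j
    exacts [hc _ _ (by decide), hc _ _ (by decide), absurd rfl hj, rfl]
  · exact rank_four_end e (x := ρ 0) (y := ρ 1) (w := ρ 2) (z := ρ 3)
      (mem_Gi (by decide)) (mem_Gi (by decide)) (mem_Gi (by decide)) (hs.1 _) (hs.1 _) (hs.1 _)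
      (hs.1 _) (heven _) (notMem_Gi hs hip _) (hle _ (by intro j hj; fin_cases j <;> simp_all))
      (hc _ _ (by decide)) (ne_of_ne hs hip (by decide)) (hc _ _ (by decide)) (hc _ _ (by decide))

lemma rank_five (ρ : Fin 5 → P11) (hs : Sggi ρ) (hip : IntersectionProperty ρ)
    (heven : ∀ i, Perm.sign (ρ i) = 1) (i : Fin 5) (e : Gi ρ i ≃* PSL2_11) : False := by
  have hle : ∀ s : Set P11, (∀ j, j ≠ i → ρ j ∈ s) → Gi ρ i ≤ Subgroup.closure s := by
    intro s h
    apply Subgroup.closure_mono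
    rintro _ ⟨j, hj, rfl⟩
    exact h j hj
  have hc : ∀ a b : Fin 5, ((a : ℕ) + 1 < b ∨ (b : ℕ) + 1 < a) → ρ a * ρ b = ρ b * ρ a :=
    fun a b h => hs.comm h
  have hcc := fun (x : P11) (hx : x ∈ Gi ρ i) (ix : IsInvolution x)
    (h : ∀ j, j ≠ i → x * ρ j = ρ j * x) => not_central e hx ix (comm_of_closure le_rfl (by
      rintro _ ⟨j, hj, rfl⟩; exact h j hj))
  fin_cases i
  · exact rank_five_end e (x := ρ 4) (y := ρ 3) (w := ρ 2) (v := ρ 1) (z := ρ 0)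
      (mem_Gi (by decide)) (mem_Gi (by decide)) (mem_Gi (by decide)) (mem_Gi (by decide))
      (hs.1 _) (hs.1 _) (hs.1 _) (hs.1 _)
      (hs.1 _) (heven _) (notMem_Gi hs hip _) (hle _ (by intro j hj; fin_cases j <;> simp_all))
      (hc _ _ (by decide)) (hc _ _ (by decide)) (hc _ _ (by decide)) (ne_of_ne hs hip (by decide))
      (ne_of_ne hs hip (by decide)) (hc _ _ (by decide)) (hc _ _ (by decide)) (hc _ _ (by decide))
  · refine hcc (ρ 0) (mem_Gi (by decide)) (hs.1 _) fun j hj => ?_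
    fin_cases j
    exacts [rfl, absurd rfl hj, hc _ _ (by decide), hc _ _ (by decide), hc _ _ (by decide)]
  · exact rank_five_mid e (x := ρ 0) (y := ρ 1) (z := ρ 3) (w := ρ 4)
      (mem_Gi (by decide)) (mem_Gi (by decide)) (mem_Gi (by decide)) (mem_Gi (by decide))
      (hs.1 _) (hs.1 _) (hs.1 _) (hs.1 _) (hle _ (by intro j hj; fin_cases j <;> simp_all))
      (ne_of_ne hs hip (by decide)) (hc _ _ (by decide)) (hc _ _ (by decide)) (hc _ _ (by decide))
      (hc _ _ (by decide))
  · refine hcc (ρ 4) (mem_Gi (by decide)) (hs.1 _) fun j hj => ?_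
    fin_cases j
    exacts [hc _ _ (by decide), hc _ _ (by decide), hc _ _ (by decide), absurd rfl hj, rfl]
  · exact rank_five_end e (x := ρ 0) (y := ρ 1) (w := ρ 2) (v := ρ 3) (z := ρ 4)
      (mem_Gi (by decide)) (mem_Gi (by decide)) (mem_Gi (by decide)) (mem_Gi (by decide))
      (hs.1 _) (hs.1 _) (hs.1 _) (hs.1 _)
      (hs.1 _) (heven _) (notMem_Gi hs hip _) (hle _ (by intro j hj; fin_cases j <;> simp_all))
      (hc _ _ (by decide)) (hc _ _ (by decide)) (hc _ _ (by decide)) (ne_of_ne hs hip (by decide))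
      (ne_of_ne hs hip (by decide)) (hc _ _ (by decide)) (hc _ _ (by decide)) (hc _ _ (by decide))

/-- If `Γ` is an even transitive string C-group of degree 11 of
rank `r ∈ {4,5}`, then no maximal parabolic subgroup `G_i` is isomorphic to
`PSL₂(11)`. -/
theorem statement4 {r : ℕ} (hr : r = 4 ∨ r = 5) (ρ : Fin r → Perm (Fin 11))
    (hsggi : Sggi ρ) (hip : IntersectionProperty ρ)
    (htrans : IsTransitiveSubgroup (Subgroup.closure (Set.range ρ)))
    (heven : ∀ i, Perm.sign (ρ i) = 1) :
    ∀ i : Fin r, ¬ Nonempty ((Gi ρ i) ≃* PSL2_11) := by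
  rintro i ⟨e⟩
  rcases hr with rfl | rfl
  · exact rank_four ρ hsggi hip heven i e
  · exact rank_five ρ hsggi hip heven i e
end

section
/- Let Γ = (G, (ρ_0, …, ρ_{r−1})) be an even transitive string C-group of degree 11 of rank r ∈ {4,5}. If Γ admits a 2-fracture graph, then r ≠ 5. -/
/-!
The five involutions cannot exist for a reason that uses neither the intersection property nor
anything about primitive groups: only the string relations, evenness, transitivity and the
fracture edges matter.

An even involution of 11 points moves 4 or 8 points. For each label `i`, the endpoints of the
`i`-edges that join different `G_i`-orbits form a set of at least four points. Three such sets,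
those of the labels 0, 2 and 4, cannot be pairwise disjoint among 11 points (`pigeonhole`), so some
point `x` lies on fracture edges of two labels `I`, `J` among 0, 2, 4. These involutions commute,
and `x`, `ρ_I x`, `ρ_J x`, `ρ_I ρ_J x` are four distinct points.

From this square a backtracking search in the style of low-index subgroup enumeration is run.
It names points as they are met and branches over the image of a named point under some `ρ_i`,
which is an already named point or a new one. A branch dies if

* two far labels fail to commute at some named point,
* `x` and `ρ_I x` are joined by a path without label `I`, or similarly for `J`,
* some `ρ_i` cannot be completed to an involution moving 4 or 8 points, at least four of which lie
  on fracture edges of label `i` (the orbits of `G_i` are tracked by union-find forests),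
* all images are known and fewer than 11 points occur, against transitivity.

No branch survives. The search is a Boolean function `start`, evaluated by the kernel in
`start_zero_four`, `start_zero_two` and `start_two_four`; it is written with bare recursors and
with tables packed into natural numbers so that this evaluation takes seconds. Soundness is
`start_sound`: a naming of points realizing the current state (`Inv`) extends to one of its
branches, so a successful search contradicts the existence of the group.
-/

open Equiv

/-- `a` and `b` are in the same orbit of the subgroup `H` of `Perm Ω`. -/
def SameOrbit {Ω : Type*} (H : Subgroup (Perm Ω)) (a b : Ω) : Prop :=
  ∃ g ∈ H, g a = b

/-- The sggi admits a 2-fracture graph: for every `i` there are at least two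
distinct `i`-edges whose endpoints lie in different `G_i`-orbits. -/
def Has2FractureGraph {r : ℕ} {Ω : Type*} [DecidableEq Ω] (ρ : Fin r → Perm Ω) : Prop :=
  ∀ i, ∃ a b : Ω, ρ i a ≠ a ∧ ρ i b ≠ b ∧
    ¬ SameOrbit (Gi ρ i) a (ρ i a) ∧ ¬ SameOrbit (Gi ρ i) b (ρ i b) ∧
    ({a, ρ i a} : Finset Ω) ≠ ({b, ρ i b} : Finset Ω)

namespace Fracture

/-! ### Evaluation-friendly primitives -/

/-- Case distinction on a natural number, stated with the bare recursor so that the kernel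
evaluates `n` to a literal before passing its predecessor on. -/
noncomputable def natCase {α : Type} (n : ℕ) (z : α) (s : ℕ → α) : α :=
  Nat.rec z (fun q _ => s q) n

/-- Function application `s n`, arranged so that kernel reduction evaluates `n` to a literal
first (call by value); without it unevaluated terms would pile up in the search state. -/
noncomputable def force {α : Type} (n : ℕ) (s : ℕ → α) : α :=
  natCase n (s 0) (fun q => s (Nat.succ q))

/-- `p a` holds for all `a < k`. -/
noncomputable def allBelow (k : ℕ) (p : ℕ → Bool) : Bool :=
  Nat.rec true (fun n ih => and ih (p n)) k

/-- `p j` holds for all `j` in the list. -/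
noncomputable def allIn (l : List ℕ) (p : ℕ → Bool) : Bool :=
  List.rec true (fun h _ ih => and (p h) ih) l

/-- The sum of `p a` over `a < k`. -/
noncomputable def sumBelow (k : ℕ) (p : ℕ → ℕ) : ℕ :=
  Nat.rec 0 (fun n ih => Nat.add ih (p n)) k

@[simp] lemma natCase_zero {α : Type} (z : α) (s : ℕ → α) : natCase 0 z s = z := rfl

@[simp] lemma natCase_succ {α : Type} (n : ℕ) (z : α) (s : ℕ → α) :
    natCase (n + 1) z s = s n := rfl

@[simp] lemma force_eq {α : Type} (n : ℕ) (s : ℕ → α) : force n s = s n := by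
  cases n <;> rfl

lemma natCase_true {n : ℕ} {s : ℕ → Bool} :
    natCase n true s = true ↔ ∀ q, n = q + 1 → s q = true := by
  cases n <;> simp

lemma natCase_false {n : ℕ} {s : ℕ → Bool} :
    natCase n false s = true ↔ ∃ q, n = q + 1 ∧ s q = true := by
  cases n <;> simp

lemma allBelow_iff {k : ℕ} {p : ℕ → Bool} : allBelow k p = true ↔ ∀ a < k, p a = true := by
  induction k with
  | zero => simp [allBelow]
  | succ n ih =>
    have : allBelow (n + 1) p = (allBelow n p && p n) := rfl
    rw [this, Bool.and_eq_true, ih]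
    constructor
    · rintro ⟨h, h'⟩ a ha
      rcases Nat.lt_succ_iff_lt_or_eq.mp ha with h1 | rfl
      exacts [h a h1, h']
    · exact fun h => ⟨fun a ha => h a (by omega), h n (by omega)⟩

lemma allIn_iff {l : List ℕ} {p : ℕ → Bool} : allIn l p = true ↔ ∀ j ∈ l, p j = true := by
  induction l with
  | nil => simp [allIn]
  | cons h t ih =>
    have : allIn (h :: t) p = (p h && allIn t p) := rfl
    simp [this, ih]

lemma sumBelow_eq (k : ℕ) (p : ℕ → ℕ) : sumBelow k p = ∑ a ∈ Finset.range k, p a := by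
  induction k with
  | zero => rfl
  | succ n ih => rw [Finset.sum_range_succ, ← ih]; rfl

/-! ### Packed tables -/

/-- The position of the entry for label `i` and point name `a < 16`. -/
def ix (i a : ℕ) : ℕ := Nat.add (Nat.mul 16 i) a

/-- The hexadecimal digit at position `x` of a table packed into one natural number. The lowest
32 bits are skipped; see `put`. A digit `0` means that the entry is undefined, and
`v + 1` encodes the value `v`. -/
def digit (T x : ℕ) : ℕ := Nat.land (Nat.shiftRight T (Nat.add 32 (Nat.mul 4 x))) 15

/-- Write the digit `v` at an empty position `x`. The second argument of `xor` scrambles the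
lowest 32 bits, which `digit` never reads: the kernel hashes a numeral by these bits alone, and
distinct tables with the same hash would slow its caches down. -/
def put (T x v : ℕ) : ℕ :=
  Nat.xor (Nat.lor T (Nat.shiftLeft v (Nat.add 32 (Nat.mul 4 x))))
    (Nat.land (Nat.mul (Nat.add (Nat.mul 16 x) v) 2654435761) 4294967295)

lemma ix_inj {i a j b : ℕ} (ha : a < 16) (hb : b < 16) : ix i a = ix j b ↔ i = j ∧ a = b := by
  change 16 * i + a = 16 * j + b ↔ _
  omega

lemma digit_put {T x v y : ℕ} (hv : v < 16) :
    digit (put T x v) y = digit T y ||| (if y = x then v else 0) := by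
  have hH : ∀ n, 32 ≤ n → Nat.testBit (((16 * x + v) * 2654435761) &&& 4294967295) n = false := by
    intro n hn
    refine Nat.testBit_lt_two_pow (lt_of_le_of_lt Nat.and_le_right ?_)
    exact lt_of_lt_of_le (by norm_num : 4294967295 < 2 ^ 32)
      (Nat.pow_le_pow_right (by norm_num) hn)
  have hv' : ∀ n, 4 ≤ n → Nat.testBit v n = false := fun n hn =>
    Nat.testBit_lt_two_pow (lt_of_lt_of_le hv (Nat.pow_le_pow_right (n := 2) (by norm_num) hn))
  have h15 : ∀ n, Nat.testBit 15 n = decide (n < 4) := fun n =>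
    Nat.testBit_two_pow_sub_one 4 n
  change (((T ||| v <<< (32 + 4 * x)) ^^^ (((16 * x + v) * 2654435761) &&& 4294967295))
      >>> (32 + 4 * y)) &&& 15 = ((T >>> (32 + 4 * y)) &&& 15) ||| _
  apply Nat.eq_of_testBit_eq
  intro n
  rw [Nat.testBit_and, Nat.testBit_shiftRight, Nat.testBit_xor, hH _ (by omega), Nat.testBit_or,
    Nat.testBit_or, Nat.testBit_and, Nat.testBit_shiftRight, Nat.testBit_shiftLeft, h15]
  by_cases hn : n < 4
  · split_ifs with hyx
    · subst hyx
      simp [hn]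
    · rcases lt_or_gt_of_ne hyx with h | h
      · have : ¬ (32 + 4 * x ≤ 32 + 4 * y + n) := by omega
        simp [hn]
        omega
      · have := hv' (32 + 4 * y + n - (32 + 4 * x)) (by omega)
        simp [hn, this]
  · split_ifs with hyx
    · simp [hn, hv' n (by omega)]
    · simp [hn]

lemma digit_zero (x : ℕ) : digit 0 x = 0 := by
  change (0 >>> _) &&& 15 = 0
  simp

/-! ### The search -/

/-- The labels at distance at least two from `i`, for `i < 5`. -/
noncomputable def far (i : ℕ) : List ℕ :=
  natCase i [2, 3, 4] fun i => natCase i [3, 4] fun i => natCase i [0, 4] fun i =>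
    natCase i [0, 1] fun _ => [0, 1, 2]

/-- The table `T` does not contradict `ρ i (ρ j x) = ρ j (ρ i x)` at the point named `x`. -/
noncomputable def locAt (T i j x : ℕ) : Bool :=
  natCase (digit T (ix i x)) true fun m => natCase (digit T (ix j x)) true fun y =>
    natCase (digit T (ix j m)) true fun u => natCase (digit T (ix i y)) true fun v => Nat.beq u v

/-- All commutation tests that involve the new `i`-edge between `a` and `m`. -/
noncomputable def locOk (T i a m : ℕ) : Bool :=
  allIn (far i) fun j =>
    and (and (locAt T i j a) (natCase (digit T (ix j a)) true fun y => locAt T i j y))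
      (and (locAt T i j m) (natCase (digit T (ix j m)) true fun y => locAt T i j y))

/-- The root of `a` in the union-find forest `P` of label `j`. The classes of this forest are
the sets of names known to be connected without using label `j`. -/
noncomputable def find (P j a : ℕ) : ℕ :=
  Nat.rec (fun a => a) (fun _ ih a => natCase (digit P (ix j a)) a ih) 11 a

/-- Merge the classes of `a` and `m` in the forest of label `j`. -/
noncomputable def union (P j a m : ℕ) : ℕ :=
  force (find P j a) fun r => force (find P j m) fun q =>
    cond (Nat.beq r q) P
      (natCase (digit P (ix j q)) (put P (ix j q) (Nat.succ r)) fun _ => P)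

/-- Record `ρ i a = m` and `ρ i m = a`. -/
def addT (T i a m : ℕ) : ℕ := put (put T (ix i a) (Nat.succ m)) (ix i m) (Nat.succ a)

/-- An `i`-edge between `a` and `m` joins their classes in the forests of all other labels. -/
noncomputable def addP (P i a m : ℕ) : ℕ :=
  cond (Nat.beq a m) P
   (Nat.rec P (fun j ih => cond (Nat.beq i j) ih (force ih fun P => union P j a m)) 5)

/-- The contribution of the name `a` to the statistics of label `i`, packed into one number:
moved points count `1`, fixed points `16`, and moved points whose `i`-edge is known to join two
points of the same `G_i`-orbit count an additional `256`. -/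
noncomputable def weight (T P i a : ℕ) : ℕ :=
  natCase (digit T (ix i a)) 0 fun b => cond (Nat.beq b a) 16
    (cond (Nat.beq (find P i a) (find P i b)) 257 1)

/-- The statistics `t` are compatible with `ρ i` being a product of two or four transpositions
(moving 4 or 8 points) such that at least four of the moved points lie on fracture edges. -/
noncomputable def cntCheck (t : ℕ) : Bool :=
  force t fun t => force (Nat.land t 15) fun nf => force (Nat.land (Nat.shiftRight t 4) 15) fun fx =>
   force (Nat.shiftRight t 8) fun bad =>
    or (and (Nat.ble nf 4) (and (Nat.ble fx 7) (Nat.ble bad 0)))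
      (and (Nat.ble nf 8) (and (Nat.ble fx 3) (Nat.ble bad 4)))

/-- The edges `01` and `02` of the initial square can still be fracture edges, and the statistics
of every label are admissible. -/
noncomputable def cntOk (I J k T P : ℕ) : Bool :=
  and (and (not (Nat.beq (find P I 0) (find P I 1))) (not (Nat.beq (find P J 0) (find P J 2))))
    (allBelow 5 fun i => cntCheck (sumBelow k (weight T P i)))

/-- Some label `j` far from `i` already has a path of labels `j`, `i` starting at `a`, so that the
`i`-image of `a` is the fourth corner of a square with three known corners. -/
noncomputable def semi (T i a : ℕ) : Bool :=
  not (allIn (far i) fun j => natCase (digit T (ix j a)) true fun y =>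
    natCase (digit T (ix i y)) true fun _ => false)

/-- The first label `i` of the list `l` with undefined entry at `a` and `q i a`, encoded as the
successor of `ix i a`; the default `0` if there is none. -/
noncomputable def pickL (T a : ℕ) (q : ℕ → ℕ → Bool) (l : List ℕ) : ℕ :=
  List.rec 0 (fun i _ ih =>
    natCase (digit T (ix i a)) (cond (q i a) (Nat.succ (ix i a)) ih) fun _ => ih) l

/-- The result of `pickL` for the first name `a < k` where it is nonzero. -/
noncomputable def pickA (T k : ℕ) (o : List ℕ) (q : ℕ → ℕ → Bool) : ℕ :=
  Nat.rec 0 (fun a ih => natCase ih (pickL T a q o) (fun r => Nat.succ r)) k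

/-- The undefined entry to branch on, preferably one satisfying `semi`. The search re-checks this
choice, so nothing has to be proved about it. -/
noncomputable def pick (o : List ℕ) (k T : ℕ) : ℕ :=
  natCase (pickA T k o (semi T)) (pickA T k o fun _ _ => true) Nat.succ

/-- All entries of the first `k` names are defined. -/
noncomputable def full (k T : ℕ) : Bool :=
  allBelow 5 fun i => allBelow k fun a => natCase (digit T (ix i a)) false fun _ => true

/-- Backtracking search in the style of low-index subgroup enumeration. The state consists of `k`
names of points, the table `T` of known images and the forests `P`. An undefined entry is assigned
each of the existing names or one new name, and the function returns `true` if all branches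
end in a contradiction. The list `o` only fixes the order in which entries are chosen. -/
noncomputable def refute (o : List ℕ) (I J : ℕ) (fuel : ℕ) : ℕ → ℕ → ℕ → Bool :=
  Nat.rec (fun _ _ _ => false) (fun _ ih k T P =>
    natCase (pick o k T) (and (full k T) (Nat.blt k 11)) fun c =>
      force (Nat.shiftRight c 4) fun i => force (Nat.land c 15) fun a =>
        and (and (Nat.blt a k) (and (Nat.blt i 5) (Nat.beq (digit T (ix i a)) 0)))
          (allBelow (Nat.succ k) fun m => or (Nat.beq m 11)
            (natCase (digit T (ix i m))
              (force (addT T i a m) fun T' => or (not (locOk T' i a m))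
                (force (addP P i a m) fun P' =>
                  force (cond (Nat.beq m k) (Nat.succ k) k) fun k' =>
                    or (not (cntOk I J k' T' P')) (ih k' T' P')))
              fun v => not (Nat.beq v a)))) fuel

/-- The search started from a square `0, 1, 3, 2` with `I`-edges `01`, `23` and `J`-edges `02`,
`13`. Its depth is at most the number 55 of table entries. -/
noncomputable def start (o : List ℕ) (I J : ℕ) : Bool :=
  force (addT (addT (addT (addT 0 I 0 1) J 0 2) J 1 3) I 2 3) fun T =>
  force (addP (addP (addP (addP 0 I 0 1) J 0 2) J 1 3) I 2 3) fun P =>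
    refute o I J 60 4 T P

set_option maxRecDepth 100000 in
lemma start_zero_four : start [0, 4, 2, 1, 3] 0 4 = true := by decide +kernel

set_option maxRecDepth 100000 in
lemma start_zero_two : start [4, 0, 2, 3, 1] 0 2 = true := by decide +kernel

set_option maxRecDepth 100000 in
lemma start_two_four : start [0, 1, 4, 2, 3] 2 4 = true := by decide +kernel

/-! ### Soundness of the search -/

/-- The properties of five involutions `ρ 0, …, ρ 4` of 11 points used by the search. The relation
`SO i` stands for lying in the same orbit of `G_i`. -/
structure Hyp (ρ : ℕ → Perm (Fin 11)) (SO : ℕ → Fin 11 → Fin 11 → Prop) : Prop where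
  invol : ∀ i < 5, ∀ x, ρ i (ρ i x) = x
  comm : ∀ i < 5, ∀ j ∈ far i, ∀ x, ρ i (ρ j x) = ρ j (ρ i x)
  equiv : ∀ i, Equivalence (SO i)
  edge : ∀ i < 5, ∀ j < 5, i ≠ j → ∀ x, SO j x (ρ i x)
  count : ∀ i < 5, ∀ A B C : Finset (Fin 11), (∀ x ∈ A, ρ i x ≠ x) → (∀ x ∈ B, ρ i x = x) →
    (∀ x ∈ C, ρ i x ≠ x ∧ SO i x (ρ i x)) →
    (A.card ≤ 4 ∧ B.card ≤ 7 ∧ C.card ≤ 0) ∨ (A.card ≤ 8 ∧ B.card ≤ 3 ∧ C.card ≤ 4)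
  trans : ∀ S : Finset (Fin 11), S.Nonempty → (∀ i < 5, ∀ x ∈ S, ρ i x ∈ S) → S = Finset.univ

/-- The search state `(k, T, P)` is realized by the naming `f` of points: names below `k` denote
distinct points, entries of `T` are true, and `P` joins only points in common orbits. -/
structure Inv (ρ : ℕ → Perm (Fin 11)) (SO : ℕ → Fin 11 → Fin 11 → Prop) (I J : ℕ)
    (f : ℕ → Fin 11) (k T P : ℕ) : Prop where
  le : k ≤ 11
  ge : 3 ≤ k
  inj : ∀ a < k, ∀ b < k, f a = f b → a = b
  tbl : ∀ i < 5, ∀ a < 16, ∀ v, digit T (ix i a) = v + 1 → a < k ∧ v < k ∧ ρ i (f a) = f v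
  forest : ∀ j < 5, ∀ a < 16, ∀ v, digit P (ix j a) = v + 1 → a < k ∧ v < k ∧ SO j (f a) (f v)
  goodI : ¬ SO I (f 0) (f 1)
  goodJ : ¬ SO J (f 0) (f 2)

lemma mem_far {i : ℕ} (hi : i < 5) {j : ℕ} : j ∈ far i ↔ j < 5 ∧ (i + 1 < j ∨ j + 1 < i) := by
  constructor
  · intro h
    have key : ∀ i < 5, ∀ j ∈ far i, j < 5 ∧ (i + 1 < j ∨ j + 1 < i) := by decide
    exact key i hi j h
  · rintro ⟨hj, h⟩
    have key : ∀ i < 5, ∀ j < 5, (i + 1 < j ∨ j + 1 < i) → j ∈ far i := by decide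
    exact key i hi j hj h

section Soundness

variable {ρ : ℕ → Perm (Fin 11)} {SO : ℕ → Fin 11 → Fin 11 → Prop} {I J : ℕ}
  {f : ℕ → Fin 11} {k T P : ℕ}

lemma locAt_true (h : Hyp ρ SO) (hI : Inv ρ SO I J f k T P) {i j x : ℕ} (hi : i < 5)
    (hj : j ∈ far i) (hx : x < k) : locAt T i j x = true := by
  have hj5 : j < 5 := ((mem_far hi).mp hj).1
  have hk := hI.le
  rw [locAt, natCase_true]
  intro m hm
  rw [natCase_true]
  intro y hy
  rw [natCase_true]
  intro u hu
  rw [natCase_true]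
  intro v hv
  obtain ⟨-, hmk, hm⟩ := hI.tbl i hi x (by omega) m hm
  obtain ⟨-, hyk, hy⟩ := hI.tbl j hj5 x (by omega) y hy
  obtain ⟨-, huk, hu⟩ := hI.tbl j hj5 m (by omega) u hu
  obtain ⟨-, hvk, hv⟩ := hI.tbl i hi y (by omega) v hv
  rw [Nat.beq_eq]
  refine hI.inj u huk v hvk ?_
  rw [← hu, ← hv, ← hm, ← hy, h.comm i hi j hj]

lemma locOk_true (h : Hyp ρ SO) (hI : Inv ρ SO I J f k T P) {i a m : ℕ} (hi : i < 5)
    (ha : a < k) (hm : m < k) : locOk T i a m = true := by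
  have hk := hI.le
  rw [locOk, allIn_iff]
  intro j hj
  have hj5 : j < 5 := ((mem_far hi).mp hj).1
  have key : ∀ x < k, (locAt T i j x && natCase (digit T (ix j x)) true
      fun y => locAt T i j y) = true := by
    intro x hx
    rw [Bool.and_eq_true, natCase_true]
    exact ⟨locAt_true h hI hi hj hx, fun y hy =>
      locAt_true h hI hi hj (hI.tbl j hj5 x (by omega) y hy).2.1⟩
  exact Bool.and_eq_true _ _ ▸ ⟨key a ha, key m hm⟩

lemma find_spec (h : Hyp ρ SO) (hI : Inv ρ SO I J f k T P) {j a : ℕ} (hj : j < 5)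
    (ha : a < k) : find P j a < k ∧ SO j (f a) (f (find P j a)) := by
  have hk := hI.le
  rw [find]
  generalize 11 = n
  induction n generalizing a with
  | zero => exact ⟨ha, (h.equiv j).refl _⟩
  | succ n ih =>
    rcases hd : digit P (ix j a) with _ | v
    · simp only [hd, natCase_zero]
      exact ⟨ha, (h.equiv j).refl _⟩
    · simp only [hd, natCase_succ]
      obtain ⟨-, hv, hs⟩ := hI.forest j hj a (by omega) v hd
      obtain ⟨h1, h2⟩ := ih hv
      exact ⟨h1, (h.equiv j).trans hs h2⟩

lemma inv_addT (h : Hyp ρ SO) (hI : Inv ρ SO I J f k T P) {i a m : ℕ} (hi : i < 5)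
    (ha : a < k) (hm : m < k) (ham : ρ i (f a) = f m) (hda : digit T (ix i a) = 0)
    (hdm : digit T (ix i m) = 0) : Inv ρ SO I J f k (addT T i a m) P := by
  have hk := hI.le
  refine { hI with tbl := ?_ }
  intro i' hi' a' ha' v hv
  have hma : ρ i (f m) = f a := by rw [← ham, h.invol i hi]
  rw [addT, digit_put (by omega), digit_put (by omega)] at hv
  simp only [ix_inj ha' (show a < 16 by omega), ix_inj ha' (show m < 16 by omega)] at hv
  by_cases h1 : i' = i ∧ a' = a
  · obtain ⟨e1, e2⟩ := h1
    rw [e1, e2, hda] at hv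
    have : v = m := by
      by_cases h2 : a = m
      · simpa [h2] using hv.symm
      · simpa [h2] using hv.symm
    rw [e1, e2, this]
    exact ⟨ha, hm, ham⟩
  · by_cases h2 : i' = i ∧ a' = m
    · obtain ⟨e1, e2⟩ := h2
      rw [if_neg h1, e1, e2, hdm] at hv
      have : v = a := by simpa using hv.symm
      rw [e1, e2, this]
      exact ⟨hm, ha, hma⟩
    · simp only [h1, h2, if_false, Nat.or_zero] at hv
      exact hI.tbl i' hi' a' ha' v hv

lemma inv_union (h : Hyp ρ SO) (hI : Inv ρ SO I J f k T P) {j a m : ℕ} (hj : j < 5)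
    (ha : a < k) (hm : m < k) (hs : SO j (f a) (f m)) :
    Inv ρ SO I J f k T (union P j a m) := by
  have hk := hI.le
  obtain ⟨h1, h2⟩ := find_spec h hI hj ha
  obtain ⟨h3, h4⟩ := find_spec h hI hj hm
  rw [union]
  simp only [force_eq]
  set r := find P j a
  set q := find P j m
  cases Nat.beq r q with
  | true => exact hI
  | false =>
    rcases hd : digit P (ix j q) with _ | v
    · refine { hI with forest := ?_ }
      intro j' hj' a' ha' v hv
      simp only [cond_false, natCase_zero] at hv
      rw [digit_put (by omega)] at hv
      simp only [ix_inj ha' (show q < 16 by omega)] at hv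
      by_cases h5 : j' = j ∧ a' = q
      · obtain ⟨rfl, rfl⟩ := h5
        simp [hd] at hv
        subst hv
        exact ⟨h3, h1, (h.equiv j').trans ((h.equiv j').symm h4)
          ((h.equiv j').trans ((h.equiv j').symm hs) h2)⟩
      · simp only [h5, if_false, Nat.or_zero] at hv
        exact hI.forest j' hj' a' ha' v hv
    · exact hI

lemma inv_addP (h : Hyp ρ SO) (hI : Inv ρ SO I J f k T P) {i a m : ℕ} (hi : i < 5)
    (ha : a < k) (hm : m < k) (ham : ρ i (f a) = f m) :
    Inv ρ SO I J f k T (addP P i a m) := by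
  rw [addP]
  cases Nat.beq a m with
  | true => exact hI
  | false =>
    simp only [cond_false]
    simp only [force_eq]
    have key : ∀ n ≤ 5, Inv ρ SO I J f k T (Nat.rec P (fun j ih =>
        cond (Nat.beq i j) ih (union ih j a m)) n) := by
      intro n
      induction n with
      | zero => exact fun _ => hI
      | succ n ih =>
        intro hn
        have ih := ih (by omega)
        rcases hb : Nat.beq i n with _ | _
        · simp only [hb, cond_false]
          have hne : i ≠ n := fun he => by simp [he] at hb
          refine inv_union (j := n) h ih (by omega) ha hm ?_
          rw [← ham]
          exact h.edge i hi n (by omega) hne _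
        · simpa only [hb, cond_true] using ih
    exact key 5 le_rfl

open Classical in
lemma cntOk_true (h : Hyp ρ SO) (hI : Inv ρ SO I J f k T P) (hI5 : I < 5) (hJ5 : J < 5) :
    cntOk I J k T P = true := by
  have hk := hI.le
  have hk3 := hI.ge
  have hfind : ∀ j < 5, ∀ a < k, ∀ b < k, find P j a = find P j b → SO j (f a) (f b) := by
    intro j hj a ha b hb hab
    have h1 := (find_spec h hI hj ha).2
    have h2 := (find_spec h hI hj hb).2
    rw [hab] at h1
    exact (h.equiv j).trans h1 ((h.equiv j).symm h2)
  rw [cntOk, Bool.and_eq_true, Bool.and_eq_true, allBelow_iff]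
  refine ⟨⟨?_, ?_⟩, ?_⟩
  · rw [Bool.not_eq_true', ← Bool.not_eq_true, Nat.beq_eq]
    exact fun hc => hI.goodI (hfind I hI5 0 (by omega) 1 (by omega) hc)
  · rw [Bool.not_eq_true', ← Bool.not_eq_true, Nat.beq_eq]
    exact fun hc => hI.goodJ (hfind J hJ5 0 (by omega) 2 (by omega) hc)
  intro i hi
  set A := (Finset.range k).filter fun a => ∃ v, digit T (ix i a) = v + 1 ∧ v ≠ a with hA
  set B := (Finset.range k).filter fun a => digit T (ix i a) = a + 1 with hB
  set C := (Finset.range k).filter fun a => ∃ v, digit T (ix i a) = v + 1 ∧ v ≠ a ∧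
    find P i a = find P i v with hC
  have hsum : sumBelow k (weight T P i) = A.card + 16 * B.card + 256 * C.card := by
    rw [sumBelow_eq, hA, hB, hC, Finset.card_filter, Finset.card_filter, Finset.card_filter,
      Finset.mul_sum, Finset.mul_sum, ← Finset.sum_add_distrib, ← Finset.sum_add_distrib]
    refine Finset.sum_congr rfl fun a _ => ?_
    rw [weight]
    rcases hd : digit T (ix i a) with _ | v
    · simp
    · by_cases hva : v = a
      · simp [hva]
      · have hb : Nat.beq v a = false := by
          rw [← Bool.not_eq_true, Nat.beq_eq]; exact hva
        by_cases hf : find P i a = find P i v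
        · simp [hva, hb, hf]
        · have hb' : Nat.beq (find P i a) (find P i v) = false := by
            rw [← Bool.not_eq_true, Nat.beq_eq]; exact hf
          simp [hva, hb, hf, hb']
  have himg : ∀ S ⊆ Finset.range k, (S.image f).card = S.card := by
    intro S hS
    refine Finset.card_image_of_injOn fun a ha b hb hab => ?_
    exact hI.inj a (Finset.mem_range.mp (hS ha)) b (Finset.mem_range.mp (hS hb)) hab
  have hcount := h.count i hi (A.image f) (B.image f) (C.image f) ?_ ?_ ?_
  · rw [himg A (Finset.filter_subset _ _), himg B (Finset.filter_subset _ _),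
      himg C (Finset.filter_subset _ _)] at hcount
    have h15 : ∀ n, Nat.land n 15 = n % 16 := fun n => Nat.and_two_pow_sub_one_eq_mod n 4
    have h4 : ∀ n, Nat.shiftRight n 4 = n / 16 := fun n => Nat.shiftRight_eq_div_pow n 4
    have h8 : ∀ n, Nat.shiftRight n 8 = n / 256 := fun n => Nat.shiftRight_eq_div_pow n 8
    rw [hsum, cntCheck]
    simp only [force_eq, h15, h4, h8, Bool.or_eq_true, Bool.and_eq_true, Nat.ble_eq]
    omega
  · intro x hx
    obtain ⟨a, ha, rfl⟩ := Finset.mem_image.mp hx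
    obtain ⟨hak, v, hv, hva⟩ := Finset.mem_filter.mp ha
    have hak := Finset.mem_range.mp hak
    obtain ⟨-, hvk, hr⟩ := hI.tbl i hi a (by omega) v hv
    rw [hr]
    exact fun hc => hva (hI.inj v hvk a hak hc)
  · intro x hx
    obtain ⟨a, ha, rfl⟩ := Finset.mem_image.mp hx
    obtain ⟨hak, hv⟩ := Finset.mem_filter.mp ha
    have hak := Finset.mem_range.mp hak
    exact (hI.tbl i hi a (by omega) a hv).2.2
  · intro x hx
    obtain ⟨a, ha, rfl⟩ := Finset.mem_image.mp hx
    obtain ⟨hak, v, hv, hva, hf⟩ := Finset.mem_filter.mp ha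
    have hak := Finset.mem_range.mp hak
    obtain ⟨-, hvk, hr⟩ := hI.tbl i hi a (by omega) v hv
    rw [hr]
    exact ⟨fun hc => hva (hI.inj v hvk a hak hc), hfind i hi a hak v hvk hf⟩

/-- A complete table on fewer than 11 names contradicts transitivity. -/
lemma not_full (h : Hyp ρ SO) (hI : Inv ρ SO I J f k T P) (hk : k < 11) :
    full k T ≠ true := by
  intro hfull
  simp only [full, allBelow_iff, natCase_false] at hfull
  have hk3 := hI.ge
  have huniv := h.trans ((Finset.range k).image f)
    ⟨f 0, Finset.mem_image_of_mem f (Finset.mem_range.mpr (by omega))⟩ ?_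
  · have := Finset.card_image_le (s := Finset.range k) (f := f)
    rw [huniv] at this
    simp at this
    omega
  · intro i hi x hx
    obtain ⟨a, ha, rfl⟩ := Finset.mem_image.mp hx
    have hak := Finset.mem_range.mp ha
    obtain ⟨q, hq, -⟩ := hfull i hi a hak
    obtain ⟨-, hqk, hr⟩ := hI.tbl i hi a (by omega) q hq
    rw [hr]
    exact Finset.mem_image_of_mem f (Finset.mem_range.mpr hqk)

/-- The `i`-image of a named point either has a name already or can be given the next name. -/
lemma exists_name (hI : Inv ρ SO I J f k T P) {i a : ℕ} (ha : a < k) :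
    ∃ (m : ℕ) (f' : ℕ → Fin 11) (k' : ℕ), m ≤ k ∧ k' = (if m = k then k + 1 else k) ∧
      Inv ρ SO I J f' k' T P ∧ a < k' ∧ m < k' ∧ ρ i (f' a) = f' m := by
  have hk := hI.le
  have hk3 := hI.ge
  by_cases hex : ∃ m < k, ρ i (f a) = f m
  · obtain ⟨m, hm, hr⟩ := hex
    exact ⟨m, f, k, hm.le, by rw [if_neg hm.ne], hI, ha, hm, hr⟩
  · push Not at hex
    set f' := Function.update f k (ρ i (f a)) with hf'
    have hlt : ∀ b < k, f' b = f b := fun b hb => Function.update_of_ne hb.ne _ _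
    have hself : f' k = ρ i (f a) := Function.update_self _ _ _
    have hinj : ∀ b < k + 1, ∀ c < k + 1, f' b = f' c → b = c := by
      intro b hb c hc hbc
      rcases Nat.lt_succ_iff_lt_or_eq.mp hb with hb | rfl <;>
        rcases Nat.lt_succ_iff_lt_or_eq.mp hc with hc | rfl
      · rw [hlt b hb, hlt c hc] at hbc
        exact hI.inj b hb c hc hbc
      · rw [hlt b hb, hself] at hbc
        exact absurd hbc.symm (hex b hb)
      · rw [hlt c hc, hself] at hbc
        exact absurd hbc (hex c hc)
      · rfl
    have hle : k + 1 ≤ 11 := by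
      have := Finset.card_le_card_of_injOn (s := Finset.range (k + 1))
        (t := (Finset.univ : Finset (Fin 11))) f' (fun _ _ => Finset.mem_univ _)
        (fun b hb c hc hbc => hinj b (by simpa using hb) c (by simpa using hc) hbc)
      simpa using this
    refine ⟨k, f', k + 1, le_rfl, by simp, ?_, by omega, by omega, ?_⟩
    · refine ⟨hle, by omega, hinj, ?_, ?_, ?_, ?_⟩
      · intro i' hi' b hb v hv
        obtain ⟨h1, h2, h3⟩ := hI.tbl i' hi' b hb v hv
        exact ⟨by omega, by omega, by rw [hlt b h1, hlt v h2, h3]⟩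
      · intro j hj b hb v hv
        obtain ⟨h1, h2, h3⟩ := hI.forest j hj b hb v hv
        exact ⟨by omega, by omega, by rwa [hlt b h1, hlt v h2]⟩
      · rw [hlt 0 (by omega), hlt 1 (by omega)]
        exact hI.goodI
      · rw [hlt 0 (by omega), hlt 2 (by omega)]
        exact hI.goodJ
    · rw [hlt a ha, hself]

/-- A successful search refutes every state that is realized. -/
theorem refute_sound (h : Hyp ρ SO) (hI5 : I < 5) (hJ5 : J < 5) (o : List ℕ) (n : ℕ) :
    ∀ (f : ℕ → Fin 11) (k T P : ℕ), Inv ρ SO I J f k T P →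
      refute o I J n k T P ≠ true := by
  induction n with
  | zero => exact fun f k T P _ hr => Bool.false_ne_true hr
  | succ n ih =>
    intro f k T P hI hr
    have hunf : refute o I J (n + 1) k T P =
      natCase (pick o k T) (and (full k T) (Nat.blt k 11)) fun c =>
      force (Nat.shiftRight c 4) fun i => force (Nat.land c 15) fun a =>
        and (and (Nat.blt a k) (and (Nat.blt i 5) (Nat.beq (digit T (ix i a)) 0)))
          (allBelow (Nat.succ k) fun m => or (Nat.beq m 11)
            (natCase (digit T (ix i m))
              (force (addT T i a m) fun T' => or (not (locOk T' i a m))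
                (force (addP P i a m) fun P' =>
                  force (cond (Nat.beq m k) (Nat.succ k) k) fun k' =>
                    or (not (cntOk I J k' T' P')) (refute o I J n k' T' P')))
              fun v => not (Nat.beq v a))) := rfl
    rw [hunf] at hr
    rcases hp : pick o k T with _ | c
    · rw [hp, natCase_zero, Bool.and_eq_true] at hr
      exact not_full h hI (Nat.blt_eq.mp hr.2) hr.1
    · rw [hp, natCase_succ] at hr
      simp only [force_eq] at hr
      generalize Nat.shiftRight c 4 = i at hr
      generalize Nat.land c 15 = a at hr
      simp only [Bool.and_eq_true, Nat.blt_eq, Nat.beq_eq, allBelow_iff] at hr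
      obtain ⟨⟨hak, hi, hda⟩, hall⟩ := hr
      obtain ⟨m, f', k', hm, hk', hI', hak', hmk', ham⟩ := exists_name (i := i) hI hak
      have h11 := hI'.le
      have hm' := hall m (by omega)
      rw [Bool.or_eq_true, Nat.beq_eq] at hm'
      rcases hm' with hm' | hm'
      · omega
      rcases hd : digit T (ix i m) with _ | v
      · rw [hd, natCase_zero] at hm'
        have hI1 := inv_addT h hI' hi hak' hmk' ham hda hd
        have hI2 := inv_addP h hI1 hi hak' hmk' ham
        have hkk : cond (Nat.beq m k) (Nat.succ k) k = k' := by
          rw [hk']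
          by_cases hmk : m = k
          · simp [hmk]
          · have hb : Nat.beq m k = false := by
              rw [← Bool.not_eq_true, Nat.beq_eq]; exact hmk
            simp [hb, hmk]
        rw [hkk, locOk_true h hI1 hi hak' hmk', cntOk_true h hI2 hI5 hJ5] at hm'
        exact ih f' k' _ _ hI2 (by simpa using hm')
      · -- The image of `m` is known, and it can only be `a`.
        rw [hd, natCase_succ] at hm'
        obtain ⟨-, hvk, hv⟩ := hI'.tbl i hi m (by omega) v hd
        have : v = a := hI'.inj v hvk a hak' (by rw [← hv, ← ham, h.invol i hi])
        simp [this] at hm'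

lemma digit_addT_ne {i a m j b : ℕ} (ha : a < 15) (hm : m < 15) (hb : b < 16)
    (hne : ¬ (j = i ∧ (b = a ∨ b = m))) :
    digit (addT T i a m) (ix j b) = digit T (ix j b) := by
  have h1 : ¬ ix j b = ix i a := by rw [ix_inj hb (by omega)]; tauto
  have h2 : ¬ ix j b = ix i m := by rw [ix_inj hb (by omega)]; tauto
  rw [addT, digit_put (by omega), digit_put (by omega), if_neg h1, if_neg h2, Nat.or_zero,
    Nat.or_zero]

/-- A point on fracture edges of two far labels spans a square of four distinct points, from which
the search starts. -/
lemma start_sound (h : Hyp ρ SO) (hI5 : I < 5) (hJ : J ∈ far I) (o : List ℕ)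
    (ho : start o I J = true) (x : Fin 11) (hxI : ¬ SO I x (ρ I x)) (hxJ : ¬ SO J x (ρ J x)) :
    False := by
  obtain ⟨hJ5, hfar⟩ := (mem_far hI5).mp hJ
  have hIJ : I ≠ J := by omega
  have hJI : J ≠ I := hIJ.symm
  have h01 : x ≠ ρ I x := fun hc => hxI (hc ▸ (h.equiv I).refl x)
  have h02 : x ≠ ρ J x := fun hc => hxJ (hc ▸ (h.equiv J).refl x)
  have h12 : ρ I x ≠ ρ J x := fun hc => hxI (hc ▸ h.edge J hJ5 I hI5 hJI x)
  have h13 : ρ I x ≠ ρ I (ρ J x) := fun hc => h02 ((ρ I).injective hc)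
  have h23 : ρ J x ≠ ρ I (ρ J x) := by
    rw [h.comm I hI5 J hJ]
    exact fun hc => h01 ((ρ J).injective hc)
  have h03 : x ≠ ρ I (ρ J x) := fun hc => h12 (by
    rw [← h.invol I hI5 (ρ J x), ← hc])
  let f : ℕ → Fin 11 := fun n => if n = 0 then x else if n = 1 then ρ I x else
    if n = 2 then ρ J x else ρ I (ρ J x)
  have h0 : Inv ρ SO I J f 4 0 0 := by
    refine ⟨by norm_num, by norm_num, ?_, ?_, ?_, hxI, hxJ⟩
    · intro a ha b hb hab
      interval_cases a <;> interval_cases b <;> simp_all [f]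
    · intro i _ a _ v hv
      simp [digit_zero] at hv
    · intro i _ a _ v hv
      simp [digit_zero] at hv
  have e1 : ρ I (f 0) = f 1 := rfl
  have e2 : ρ J (f 0) = f 2 := rfl
  have e3 : ρ J (f 1) = f 3 := (h.comm I hI5 J hJ x).symm
  have e4 : ρ I (f 2) = f 3 := rfl
  have t1 := inv_addT h h0 hI5 (by norm_num) (by norm_num) e1 (digit_zero _) (digit_zero _)
  have t2 := inv_addT h t1 hJ5 (by norm_num) (by norm_num) e2
    (by simp [digit_addT_ne, digit_zero, hJI]) (by simp [digit_addT_ne, digit_zero, hJI])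
  have t3 := inv_addT h t2 hJ5 (by norm_num) (by norm_num) e3
    (by simp [digit_addT_ne, digit_zero, hJI]) (by simp [digit_addT_ne, digit_zero, hJI])
  have t4 := inv_addT h t3 hI5 (by norm_num) (by norm_num) e4
    (by simp [digit_addT_ne, digit_zero, hIJ]) (by simp [digit_addT_ne, digit_zero, hIJ])
  have p1 := inv_addP h t4 hI5 (by norm_num) (by norm_num) e1
  have p2 := inv_addP h p1 hJ5 (by norm_num) (by norm_num) e2
  have p3 := inv_addP h p2 hJ5 (by norm_num) (by norm_num) e3
  have p4 := inv_addP h p3 hI5 (by norm_num) (by norm_num) e4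
  refine refute_sound h hI5 hJ5 o 60 f _ _ _ p4 ?_
  rw [start] at ho
  simpa only [force_eq] using ho

end Soundness

/-! ### Application to string groups of rank five -/

/-- An even involution of 11 points is a product of two or four disjoint transpositions. -/
lemma card_support {σ : Perm (Fin 11)} (hne : σ ≠ 1) (hσ : σ * σ = 1) (hs : Perm.sign σ = 1) :
    σ.support.card = 4 ∨ σ.support.card = 8 := by
  have hc := Perm.cycleType_of_pow_prime_eq_one (p := 2) (σ := σ) (by rw [pow_two, hσ])
  have hsum := σ.sum_cycleType
  have hle : σ.support.card ≤ 11 := by simpa using σ.support.card_le_univ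
  have hpos : σ.support.card ≠ 0 := by simpa using hne
  rw [Perm.sign_of_cycleType] at hs
  rw [hc, Multiset.sum_replicate, smul_eq_mul] at hsum
  rw [hc, Multiset.sum_replicate, smul_eq_mul, Multiset.card_replicate] at hs
  generalize σ.cycleType.card = c at hs hsum
  have hc5 : c ≤ 5 := by omega
  interval_cases c
  · omega
  · exact absurd hs (by decide)
  · omega
  · exact absurd hs (by decide)
  · omega
  · exact absurd hs (by decide)

lemma sameOrbit_equivalence (H : Subgroup (Perm (Fin 11))) : Equivalence (SameOrbit H) where
  refl x := ⟨1, H.one_mem, rfl⟩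
  symm := by
    rintro x y ⟨g, hg, rfl⟩
    exact ⟨g⁻¹, H.inv_mem hg, by simp⟩
  trans := by
    rintro x y z ⟨g, hg, rfl⟩ ⟨g', hg', rfl⟩
    exact ⟨g' * g, H.mul_mem hg' hg, rfl⟩

variable (ρ : Fin 5 → Perm (Fin 11))

/-- The involutions indexed by natural numbers, read modulo 5. -/
def rho (i : ℕ) : Perm (Fin 11) := ρ (Fin.ofNat 5 i)

/-- The relation of lying in the same orbit of `G_i`, with `i` read modulo 5. -/
def orb (i : ℕ) : Fin 11 → Fin 11 → Prop := SameOrbit (Gi ρ (Fin.ofNat 5 i))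

open Classical in
/-- The points on fracture edges of label `i`. -/
noncomputable def fracturePoints (i : ℕ) : Finset (Fin 11) :=
  Finset.univ.filter fun x => rho ρ i x ≠ x ∧ ¬ orb ρ i x (rho ρ i x)

variable {ρ}

lemma rho_rho (hsggi : Sggi ρ) (i : ℕ) (x : Fin 11) : rho ρ i (rho ρ i x) = x :=
  Perm.congr_fun (hsggi.1 (Fin.ofNat 5 i)).2 x

lemma mem_fracturePoints {i : ℕ} {x : Fin 11} :
    x ∈ fracturePoints ρ i ↔ rho ρ i x ≠ x ∧ ¬ orb ρ i x (rho ρ i x) := by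
  simp [fracturePoints]

lemma four_le_card (hsggi : Sggi ρ) (h2 : Has2FractureGraph ρ) (i : ℕ) :
    4 ≤ (fracturePoints ρ i).card := by
  obtain ⟨a, b, ha, hb, hoa, hob, hab⟩ := h2 (Fin.ofNat 5 i)
  change rho ρ i a ≠ a at ha
  change rho ρ i b ≠ b at hb
  change ¬ orb ρ i a (rho ρ i a) at hoa
  change ¬ orb ρ i b (rho ρ i b) at hob
  change ({a, rho ρ i a} : Finset (Fin 11)) ≠ {b, rho ρ i b} at hab
  have hr := rho_rho hsggi i
  have hE : Equivalence (orb ρ i) := sameOrbit_equivalence _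
  have hmem : ∀ x, x ∈ fracturePoints ρ i → rho ρ i x ∈ fracturePoints ρ i := by
    intro x hx
    rw [mem_fracturePoints] at hx ⊢
    rw [hr]
    exact ⟨hx.1.symm, fun hc => hx.2 (hE.symm hc)⟩
  have hA : a ∈ fracturePoints ρ i := mem_fracturePoints.mpr ⟨ha, hoa⟩
  have hB : b ∈ fracturePoints ρ i := mem_fracturePoints.mpr ⟨hb, hob⟩
  have h1 : a ≠ b := by rintro rfl; exact hab rfl
  have h2 : a ≠ rho ρ i b := by
    rintro rfl
    exact hab (by rw [hr, Finset.pair_comm])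
  have h3 : rho ρ i a ≠ b := by
    rintro rfl
    exact hab (by rw [hr, Finset.pair_comm])
  have h4 : rho ρ i a ≠ rho ρ i b := fun hc => h1 ((rho ρ i).injective hc)
  have hcard : ({a, rho ρ i a, b, rho ρ i b} : Finset (Fin 11)).card = 4 := by
    rw [Finset.card_insert_of_notMem, Finset.card_insert_of_notMem, Finset.card_pair hb.symm]
    · simp [h3, h4]
    · simp [ha.symm, h1, h2]
  rw [← hcard]
  apply Finset.card_le_card
  intro x hx
  simp only [Finset.mem_insert, Finset.mem_singleton] at hx
  rcases hx with rfl | rfl | rfl | rfl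
  exacts [hA, hmem _ hA, hB, hmem _ hB]

lemma hyp (hsggi : Sggi ρ) (htrans : IsTransitiveSubgroup (Subgroup.closure (Set.range ρ)))
    (heven : ∀ i, Perm.sign (ρ i) = 1) (h2 : Has2FractureGraph ρ) : Hyp (rho ρ) (orb ρ) where
  invol i _ x := rho_rho hsggi i x
  comm := by
    intro i hi j hj x
    obtain ⟨hj5, hij⟩ := (mem_far hi).mp hj
    have hc : ∀ y, rho ρ i (rho ρ j (rho ρ i (rho ρ j y))) = y := by
      intro y
      have hv : ∀ n < 5, ((Fin.ofNat 5 n : Fin 5) : ℕ) = n := fun n hn => Nat.mod_eq_of_lt hn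
      exact Perm.congr_fun (hsggi.2 (Fin.ofNat 5 i) (Fin.ofNat 5 j)
        (by rw [hv i hi, hv j hj5]; exact hij)) y
    have h1 := hc (rho ρ j (rho ρ i x))
    rwa [rho_rho hsggi, rho_rho hsggi] at h1
  equiv i := sameOrbit_equivalence _
  edge := by
    intro i hi j hj hij x
    refine ⟨rho ρ i, Subgroup.subset_closure ⟨Fin.ofNat 5 i, ?_, rfl⟩, rfl⟩
    intro hc
    have hc := congrArg Fin.val hc
    simp only [Fin.ofNat] at hc
    omega
  count := by
    intro i _ A B C hA hB hC
    have hs := card_support (hsggi.1 (Fin.ofNat 5 i)).1 (hsggi.1 (Fin.ofNat 5 i)).2 (heven _)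
    change (rho ρ i).support.card = 4 ∨ (rho ρ i).support.card = 8 at hs
    have hAs : A.card ≤ (rho ρ i).support.card :=
      Finset.card_le_card fun x hx => Perm.mem_support.mpr (hA x hx)
    have hBs : B.card + (rho ρ i).support.card ≤ 11 := by
      rw [← Finset.card_union_of_disjoint]
      · simpa using Finset.card_le_univ (B ∪ (rho ρ i).support)
      · exact Finset.disjoint_left.mpr fun x hx hx' => Perm.mem_support.mp hx' (hB x hx)
    have hCs : C.card + (fracturePoints ρ i).card ≤ (rho ρ i).support.card := by
      rw [← Finset.card_union_of_disjoint]
      · refine Finset.card_le_card fun x hx => Perm.mem_support.mpr ?_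
        rcases Finset.mem_union.mp hx with hx | hx
        exacts [(hC x hx).1, (mem_fracturePoints.mp hx).1]
      · exact Finset.disjoint_left.mpr fun x hx hx' => (mem_fracturePoints.mp hx').2 (hC x hx).2
    have h4 := four_le_card hsggi h2 i
    omega
  trans := by
    rintro S ⟨x, hx⟩ hS
    have hclosed : ∀ g ∈ Subgroup.closure (Set.range ρ), ∀ y, y ∈ S ↔ g y ∈ S := by
      intro g hg
      induction hg using Subgroup.closure_induction with
      | mem g hg =>
        obtain ⟨i, rfl⟩ := hg
        have hi : rho ρ i = ρ i := by
          rw [rho]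
          congr 1
          exact Fin.ext (Nat.mod_eq_of_lt i.2)
        intro y
        rw [← hi]
        refine ⟨hS i i.2 y, fun hy => ?_⟩
        have := hS i i.2 _ hy
        rwa [rho_rho hsggi] at this
      | one => exact fun y => Iff.rfl
      | mul g g' _ _ ih ih' => exact fun y => (ih' y).trans (ih (g' y))
      | inv g _ ih =>
        intro y
        rw [ih (g⁻¹ y)]
        simp
    refine Finset.eq_univ_iff_forall.mpr fun y => ?_
    obtain ⟨g, hg, rfl⟩ := htrans x y
    exact (hclosed g hg x).mp hx

/-- Three sets of at least four points among 11 cannot be pairwise disjoint. -/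
lemma pigeonhole {U V W : Finset (Fin 11)} (hU : 4 ≤ U.card) (hV : 4 ≤ V.card)
    (hW : 4 ≤ W.card) : (∃ x ∈ U, x ∈ V) ∨ (∃ x ∈ U, x ∈ W) ∨ ∃ x ∈ V, x ∈ W := by
  by_contra! hc
  obtain ⟨h1, h2, h3⟩ := hc
  have hUV : Disjoint U V := Finset.disjoint_left.mpr h1
  have hUVW : Disjoint (U ∪ V) W := Finset.disjoint_left.mpr fun x hx =>
    (Finset.mem_union.mp hx).elim (h2 x) (h3 x)
  have := Finset.card_le_univ ((U ∪ V) ∪ W)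
  rw [Finset.card_union_of_disjoint hUVW, Finset.card_union_of_disjoint hUV,
    Fintype.card_fin] at this
  omega

theorem no_rank_five (hsggi : Sggi ρ)
    (htrans : IsTransitiveSubgroup (Subgroup.closure (Set.range ρ)))
    (heven : ∀ i, Perm.sign (ρ i) = 1) (h2 : Has2FractureGraph ρ) : False := by
  have h := hyp hsggi htrans heven h2
  have hc := four_le_card hsggi h2
  rcases pigeonhole (hc 0) (hc 2) (hc 4) with ⟨x, hI, hJ⟩ | ⟨x, hI, hJ⟩ | ⟨x, hI, hJ⟩
  · exact start_sound h (by norm_num) (by decide) _ start_zero_two x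
      (mem_fracturePoints.mp hI).2 (mem_fracturePoints.mp hJ).2
  · exact start_sound h (by norm_num) (by decide) _ start_zero_four x
      (mem_fracturePoints.mp hI).2 (mem_fracturePoints.mp hJ).2
  · exact start_sound h (by norm_num) (by decide) _ start_two_four x
      (mem_fracturePoints.mp hI).2 (mem_fracturePoints.mp hJ).2

end Fracture

/-- If Γ is an even transitive string C-group of degree 11 of
rank r ∈ {4,5} admitting a 2-fracture graph, then r ≠ 5. -/
theorem statement6 {r : ℕ} (hr : r = 4 ∨ r = 5) (ρ : Fin r → Perm (Fin 11))
    (hsggi : Sggi ρ) (hip : IntersectionProperty ρ)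
    (htrans : IsTransitiveSubgroup (Subgroup.closure (Set.range ρ)))
    (heven : ∀ i, Perm.sign (ρ i) = 1)
    (h2frac : Has2FractureGraph ρ) :
    r ≠ 5 := by
  rintro rfl
  exact Fracture.no_rank_five hsggi htrans heven h2frac
end
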